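/- arXiv:2601.18590 — 4 statements merged into one kernel-verified Lean document; each statement's English description precedes it below -/
import Mathlib

section
/- Let q ≥ 2 be a prime power and let δ ∈ (0, 1 − 1/q) be a constant. Then there exists a constant h_δ ∈ (0,1), depending only on q and δ, such that for all sufficiently large n the following holds: for every integer ℓ with 2 ≤ ℓ ≤ n, if v_1, …, v_ℓ are independent random vectors each distributed uniformly in the Hamming ball B_q(n, ⌊δn⌋) ⊆ 𝔽_q^n, then the probability that v_1 + v_2 + ⋯ + v_ℓ ∈ B_q(n, ⌊δn⌋) is at most 2^{−h_δ n}. -/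
open Finset
open scoped Classical

/-- The Hamming ball of radius `r` in `F^n`. -/
noncomputable def hammingBall (F : Type) [Fintype F] [Zero F] [DecidableEq F] (n r : ℕ) :
    Finset (Fin n → F) :=
  Finset.univ.filter fun x => hammingNorm x ≤ r


/-- coordinate weight -/
noncomputable def cw {F : Type} [Zero F] [DecidableEq F] (s : ℝ) (x : F) : ℝ := if x = 0 then 1 else s

lemma cw_prod {F : Type} [Zero F] [DecidableEq F] (s : ℝ) (n : ℕ) (x : Fin n → F) :
    ∏ i, cw s (x i) = s ^ hammingNorm x := by
  unfold cw hammingNorm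
  rw [Finset.prod_ite]
  simp

lemma cw_pos {F : Type} [Zero F] [DecidableEq F] {s : ℝ} (hs : 0 < s) (x : F) : 0 < cw s x := by
  unfold cw; split_ifs <;> linarith

lemma cw_sum {F : Type} [Field F] [Fintype F] [DecidableEq F] (s : ℝ) :
    ∑ x : F, cw s x ^ 2 = 1 + ((Fintype.card F : ℝ) - 1) * s ^ 2 := by
  unfold cw
  rw [← Finset.add_sum_erase _ _ (Finset.mem_univ (0 : F))]
  have : ∑ x ∈ Finset.univ.erase (0 : F), (if x = 0 then (1 : ℝ) else s) ^ 2
      = ∑ x ∈ Finset.univ.erase (0 : F), s ^ 2 := by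
    apply Finset.sum_congr rfl
    intro x hx
    rw [if_neg (Finset.ne_of_mem_erase hx)]
  rw [this, Finset.sum_const, Finset.card_erase_of_mem (Finset.mem_univ _), Finset.card_univ]
  have : 1 ≤ Fintype.card F := Fintype.card_pos
  simp [Nat.cast_sub this]

lemma g_lt {F : Type} [Field F] [Fintype F] [DecidableEq F] {s : ℝ} (hs : 0 < s) (hs1 : s < 1)
    (c : F) :
    ∑ p : F × F, cw s p.1 * cw s (p.1 + p.2 + c) * cw s p.2 ^ 2 <
      (1 + ((Fintype.card F : ℝ) - 1) * s ^ 2) ^ 2 := by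
  have h1 : ∑ p : F × F, cw s p.1 ^ 2 * cw s p.2 ^ 2
      = (1 + ((Fintype.card F : ℝ) - 1) * s ^ 2) ^ 2 := by
    rw [Fintype.sum_prod_type, sq (1 + _), ← cw_sum, Finset.sum_mul_sum]
  have h2 : ∑ p : F × F, cw s (p.1 + p.2 + c) ^ 2 * cw s p.2 ^ 2
      = (1 + ((Fintype.card F : ℝ) - 1) * s ^ 2) ^ 2 := by
    rw [Fintype.sum_prod_type_right, sq (1 + _), ← cw_sum, Finset.sum_mul_sum, Finset.sum_comm]
    symm
    rw [Finset.sum_comm]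
    conv_rhs => rw [Finset.sum_comm]
    rw [Finset.sum_comm]
    apply Finset.sum_congr rfl
    intro y _
    rw [← Equiv.sum_comp (Equiv.addRight (y + c))]
    simp [add_assoc, mul_comm]
  have h3 : ∑ p : F × F, cw s p.1 * cw s (p.1 + p.2 + c) * cw s p.2 ^ 2 <
      ∑ p : F × F, (cw s p.1 ^ 2 * cw s p.2 ^ 2 + cw s (p.1 + p.2 + c) ^ 2 * cw s p.2 ^ 2) / 2 := by
    apply Finset.sum_lt_sum
    · intro p _
      nlinarith [mul_nonneg (sq_nonneg (cw s p.1 - cw s (p.1 + p.2 + c))) (sq_nonneg (cw s p.2))]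
    · refine ⟨(1, -1 - c), Finset.mem_univ _, ?_⟩
      have e1 : cw s (1 : F) = s := by simp [cw]
      have e2 : cw s ((1 : F) + (-1 - c) + c) = 1 := by
        rw [show (1 : F) + (-1 - c) + c = 0 by ring]; simp [cw]
      simp only [e1, e2]
      have := pow_pos (cw_pos hs (-1 - c)) 2
      nlinarith [mul_pos (pow_pos (sub_pos.2 hs1) 2) this]
  rw [← Finset.sum_div, Finset.sum_add_distrib, h1, h2] at h3
  linarith

lemma exists_sigma {F : Type} [Field F] [Fintype F] [DecidableEq F] {s : ℝ} (hs : 0 < s)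
    (hs1 : s < 1) :
    ∃ σ : ℝ, 0 < σ ∧ σ < 1 ∧ ∀ c : F,
      ∑ p : F × F, cw s p.1 * cw s (p.1 + p.2 + c) * cw s p.2 ^ 2 ≤
      σ * (1 + ((Fintype.card F : ℝ) - 1) * s ^ 2) ^ 2 := by
  obtain ⟨c0, hc0⟩ := Finite.exists_max (fun c : F =>
    ∑ p : F × F, cw s p.1 * cw s (p.1 + p.2 + c) * cw s p.2 ^ 2)
  have hpos : 0 < ∑ p : F × F, cw s p.1 * cw s (p.1 + p.2 + c0) * cw s p.2 ^ 2 :=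
    Finset.sum_pos (fun p _ => mul_pos (mul_pos (cw_pos hs _) (cw_pos hs _))
      (pow_pos (cw_pos hs _) 2)) Finset.univ_nonempty
  have hlt := g_lt hs hs1 c0
  have hZ := hpos.trans hlt
  refine ⟨_, div_pos hpos hZ, (div_lt_one hZ).2 hlt, fun c => ?_⟩
  rw [div_mul_cancel₀ _ hZ.ne']
  exact hc0 c

lemma pair_bound {F : Type} [Field F] [Fintype F] [DecidableEq F] {s : ℝ} (hs : 0 < s)
    (hs1 : s < 1) {A : ℝ} (n k : ℕ)
    (hA : ∀ c : F, ∑ p : F × F, cw s p.1 * cw s (p.1 + p.2 + c) * cw s p.2 ^ 2 ≤ A)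
    (b : Fin n → F) :
    (((Finset.univ : Finset (Fin n → F × F)).filter fun p =>
      (fun i => (p i).1) ∈ hammingBall F n k ∧ (fun i => (p i).2) ∈ hammingBall F n k ∧
      (fun i => (p i).1 + (p i).2 + b i) ∈ hammingBall F n k).card : ℝ) * (s ^ k) ^ 4 ≤ A ^ n := by
  have h1 : ∏ i, (∑ p : F × F, cw s p.1 * cw s (p.1 + p.2 + b i) * cw s p.2 ^ 2) ≤ A ^ n := by
    calc _ ≤ ∏ i : Fin n, A := by
          apply Finset.prod_le_prod
          · intro i _
            exact Finset.sum_nonneg (fun p _ => (mul_pos (mul_pos (cw_pos hs _) (cw_pos hs _))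
              (pow_pos (cw_pos hs _) 2)).le)
          · intro i _; exact hA _
      _ = A ^ n := by simp
  refine le_trans ?_ h1
  rw [Finset.prod_univ_sum, Fintype.piFinset_univ, ← nsmul_eq_mul, ← Finset.sum_const]
  refine le_trans (Finset.sum_le_sum (g := fun p : Fin n → F × F =>
      ∏ i, cw s (p i).1 * cw s ((p i).1 + (p i).2 + b i) * cw s (p i).2 ^ 2) ?_)
    (Finset.sum_le_sum_of_subset_of_nonneg (Finset.subset_univ _) ?_)
  · intro p hp
    simp only [Finset.mem_filter, Finset.mem_univ, true_and, hammingBall] at hp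
    obtain ⟨ha, hb, hc⟩ := hp
    rw [Finset.prod_mul_distrib, Finset.prod_mul_distrib, Finset.prod_pow,
      cw_prod s n (fun i => (p i).1), cw_prod s n (fun i => (p i).2),
      cw_prod s n (fun i => (p i).1 + (p i).2 + b i)]
    have key : ∀ m, m ≤ k → s ^ k ≤ s ^ m := fun m hm => pow_le_pow_of_le_one hs.le hs1.le hm
    have hk := pow_pos hs k
    calc (s ^ k) ^ 4 = s ^ k * s ^ k * (s ^ k) ^ 2 := by ring
      _ ≤ _ := by
        exact mul_le_mul (mul_le_mul (key _ ha) (key _ hc) hk.le (pow_pos hs _).le)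
          (pow_le_pow_left₀ hk.le (key _ hb) 2) (sq_nonneg _)
          (mul_pos (pow_pos hs _) (pow_pos hs _)).le
  · intro p _ _
    exact Finset.prod_nonneg (fun i _ => (mul_pos (mul_pos (cw_pos hs _) (cw_pos hs _))
              (pow_pos (cw_pos hs _) 2)).le)

lemma sphere_card {F : Type} [Field F] [Fintype F] [DecidableEq F] (n k : ℕ) :
    ((Finset.univ : Finset (Fin n → F)).filter fun x => hammingNorm x = k).card =
      n.choose k * (Fintype.card F - 1) ^ k := by
  classical
  have h1 : ∑ x : Fin n → F, (Polynomial.X : Polynomial ℕ) ^ hammingNorm x =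
      (1 + Polynomial.C (Fintype.card F - 1) * Polynomial.X) ^ n := by
    have e : ∀ x : Fin n → F, (Polynomial.X : Polynomial ℕ) ^ hammingNorm x =
        ∏ i, (if x i = 0 then 1 else Polynomial.X) := by
      intro x
      rw [Finset.prod_ite]
      simp [hammingNorm]
    simp_rw [e]
    have := Finset.prod_univ_sum (fun _ : Fin n => (Finset.univ : Finset F))
      (fun _ y => if y = 0 then (1 : Polynomial ℕ) else Polynomial.X)
    rw [Fintype.piFinset_univ] at this
    rw [← this, Finset.prod_const, Finset.card_univ, Fintype.card_fin]
    congr 1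
    rw [← Finset.add_sum_erase _ _ (Finset.mem_univ (0 : F))]
    rw [Finset.sum_congr rfl (g := fun _ => (Polynomial.X : Polynomial ℕ))
      (fun x hx => if_neg (Finset.ne_of_mem_erase hx))]
    rw [Finset.sum_const, Finset.card_erase_of_mem (Finset.mem_univ _), Finset.card_univ]
    simp
  have h2 := congrArg (fun P => Polynomial.coeff P k) h1
  simp only [Polynomial.finsetSum_coeff, Polynomial.coeff_X_pow] at h2
  rw [add_comm, add_pow] at h2
  simp only [mul_pow, ← Polynomial.C_pow, one_pow, mul_one, Polynomial.finsetSum_coeff] at h2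
  rw [Finset.card_filter]
  simp_rw [eq_comm (a := k)] at h2
  rw [h2]
  simp only [Polynomial.coeff_mul_natCast, Polynomial.coeff_C_mul, Polynomial.coeff_X_pow]
  by_cases hk : k ≤ n
  · rw [Finset.sum_eq_single k]
    · simp [mul_comm]
    · intro j _ hj; simp [hj.symm]
    · intro h; simp at h; omega
  · rw [Nat.choose_eq_zero_of_lt (by omega), zero_mul]
    apply Finset.sum_eq_zero
    intro j hj
    have : k ≠ j := by simp at hj; omega
    simp [this]

/-- mode estimate -/
lemma mode_bound {δ r : ℝ} (h0 : 0 < δ) (h1 : δ < 1) (hr : r = δ / (1 - δ)) (n : ℕ) (j : ℕ) :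
    (n.choose j : ℝ) * r ^ j ≤ (1 + n * r) * (n.choose ⌊δ * n⌋₊ * r ^ ⌊δ * n⌋₊) := by
  have hr0 : 0 < r := by rw [hr]; exact div_pos h0 (by linarith)
  have hrd : r * (1 - δ) = δ := by rw [hr]; field_simp; rw [div_self]; linarith
  set k := ⌊δ * (n : ℝ)⌋₊ with hk
  have hn0 : (0 : ℝ) ≤ n := Nat.cast_nonneg n
  have hkle : (k : ℝ) ≤ δ * n := Nat.floor_le (by positivity)
  have hklt : δ * n < k + 1 := Nat.lt_floor_add_one _
  have hkn : k ≤ n := by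
    have : (k : ℝ) ≤ n := by nlinarith
    exact_mod_cast this
  have hrec : ∀ j, j ≤ n → (n.choose (j + 1) : ℝ) * r ^ (j + 1) * (j + 1) =
      (n.choose j * r ^ j) * (r * (n - j)) := by
    intro j hj
    have := Nat.choose_succ_right_eq n j
    have h : (n.choose (j + 1) : ℝ) * (j + 1) = n.choose j * (n - j) := by
      rw [← Nat.cast_sub hj]; exact_mod_cast this
    rw [pow_succ]; linear_combination r ^ j * r * h
  have apos : ∀ j, 0 ≤ (n.choose j : ℝ) * r ^ j := fun j => by positivity
  -- up
  have up : ∀ j, j + 1 ≤ k → (n.choose j : ℝ) * r ^ j ≤ n.choose (j + 1) * r ^ (j + 1) := by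
    intro j hj
    have e := hrec j (by omega)
    have hj' : (j : ℝ) + 1 ≤ δ * n := le_trans (by exact_mod_cast hj) hkle
    have : (j : ℝ) + 1 ≤ r * (n - j) := by nlinarith
    have hp : (0 : ℝ) < j + 1 := by positivity
    have := mul_le_mul_of_nonneg_left this (apos j)
    rw [← e] at this
    exact le_of_mul_le_mul_right this hp
  have down : ∀ j, k + 1 ≤ j → (n.choose (j + 1) : ℝ) * r ^ (j + 1) ≤ n.choose j * r ^ j := by
    intro j hj
    by_cases hjn : j ≤ n
    · have e := hrec j hjn
      have hj' : δ * n ≤ j := by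
        have : (k : ℝ) + 1 ≤ j := by exact_mod_cast hj
        linarith
      have : r * (n - j) ≤ (j : ℝ) + 1 := by nlinarith
      have hp : (0 : ℝ) < j + 1 := by positivity
      have := mul_le_mul_of_nonneg_left this (apos j)
      rw [← e] at this
      exact le_of_mul_le_mul_right this hp
    · rw [Nat.choose_eq_zero_of_lt (show n < j + 1 by omega)]
      simpa using apos j
  have mid : (n.choose (k + 1) : ℝ) * r ^ (k + 1) ≤ (n * r) * (n.choose k * r ^ k) := by
    have e := hrec k hkn
    have hp : (1 : ℝ) ≤ k + 1 := by simp
    calc (n.choose (k + 1) : ℝ) * r ^ (k + 1) ≤ (n.choose (k + 1) : ℝ) * r ^ (k + 1) * (k + 1) :=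
          le_mul_of_one_le_right (apos _) hp
      _ = _ := e
      _ ≤ (n.choose k * r ^ k) * (r * n) := by
          apply mul_le_mul_of_nonneg_left _ (apos k)
          apply mul_le_mul_of_nonneg_left _ hr0.le
          simp
      _ = _ := by ring
  have hnr : 0 ≤ n * r := by positivity
  by_cases hjk : j ≤ k
  · have : (n.choose j : ℝ) * r ^ j ≤ n.choose k * r ^ k := by
      induction hjk using Nat.decreasingInduction with
      | self => exact le_rfl
      | of_succ m hm ih => exact (up m hm).trans ih
    nlinarith [apos k]
  · have : (n.choose j : ℝ) * r ^ j ≤ n.choose (k + 1) * r ^ (k + 1) := by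
      have hjk : k + 1 ≤ j := by omega
      induction j, hjk using Nat.le_induction with
      | base => exact le_rfl
      | succ m hm ih => exact (down m hm).trans (ih (by omega))
    nlinarith [apos k]

lemma ball_lower {F : Type} [Field F] [Fintype F] [DecidableEq F] {δ r t : ℝ}
    (h0 : 0 < δ) (h1 : δ < 1) (hr : r = δ / (1 - δ)) (ht : ((Fintype.card F : ℝ) - 1) * t = r)
    (ht0 : 0 < t) (n : ℕ) :
    (1 + r) ^ n ≤ ((n + 1) * (1 + n * r)) *
      (((hammingBall F n ⌊δ * (n : ℝ)⌋₊).card : ℝ) * t ^ ⌊δ * (n : ℝ)⌋₊) := by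
  have hr0 : 0 < r := by rw [hr]; exact div_pos h0 (by linarith)
  set k := ⌊δ * (n : ℝ)⌋₊ with hk
  have hS : (n.choose k : ℝ) * r ^ k ≤ ((hammingBall F n k).card : ℝ) * t ^ k := by
    have e : (n.choose k : ℝ) * r ^ k =
      (((Finset.univ : Finset (Fin n → F)).filter fun x => hammingNorm x = k).card : ℝ) * t ^ k := by
      rw [sphere_card, ← ht]
      have : 1 ≤ Fintype.card F := Fintype.card_pos
      push_cast [Nat.cast_sub this]
      rw [mul_pow]; ring
    rw [e]
    gcongr
    intro x hx
    simp only [hammingBall, Finset.mem_filter, Finset.mem_univ, true_and] at hx ⊢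
    exact hx.le
  calc (1 + r) ^ n = ∑ j ∈ Finset.range (n + 1), (n.choose j : ℝ) * r ^ j := by
        rw [add_comm, add_pow]; apply Finset.sum_congr rfl; intros; simp [mul_comm]
    _ ≤ ∑ j ∈ Finset.range (n + 1), (1 + n * r) * (n.choose k * r ^ k) :=
        Finset.sum_le_sum (fun j _ => mode_bound h0 h1 hr n j)
    _ = ((n + 1) * (1 + n * r)) * (n.choose k * r ^ k) := by simp; ring
    _ ≤ _ := by gcongr

lemma tuple_bound {F : Type} [Field F] [Fintype F] [DecidableEq F] (n k m : ℕ) (M : ℕ)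
    (hM : ∀ b : Fin n → F, ((Finset.univ : Finset (Fin n → F × F)).filter fun p =>
      (fun i => (p i).1) ∈ hammingBall F n k ∧ (fun i => (p i).2) ∈ hammingBall F n k ∧
      (fun i => (p i).1 + (p i).2 + b i) ∈ hammingBall F n k).card ≤ M) :
    ((Finset.univ : Finset (Fin (m + 2) → Fin n → F)).filter fun v =>
          (∀ i, v i ∈ hammingBall F n k) ∧ (∑ i, v i) ∈ hammingBall F n k).card ≤
      M * (hammingBall F n k).card ^ m := by
  have hc : (Fintype.piFinset (fun _ : Fin m => hammingBall F n k)).card =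
      (hammingBall F n k).card ^ m := by simp
  rw [← hc]
  apply Finset.card_le_mul_card_image_of_maps_to
    (f := fun (v : Fin (m + 2) → Fin n → F) (i : Fin m) => v i.succ.succ)
  · intro v hv
    simp only [Finset.mem_filter, Finset.mem_univ, true_and] at hv
    simp only [Fintype.mem_piFinset]
    exact fun i => hv.1 _
  · intro u _
    refine le_trans ?_ (hM (∑ i, u i))
    apply Finset.card_le_card_of_injOn (fun v i => (v 0 i, v 1 i))
    · intro v hv
      simp only [Finset.coe_filter, Finset.mem_filter, Finset.mem_univ, true_and,
        Set.mem_ofPred_eq] at hv ⊢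
      obtain ⟨⟨h1, h2⟩, h3⟩ := hv
      refine ⟨h1 0, h1 1, ?_⟩
      convert h2 using 1
      rw [Fin.sum_univ_succ, Fin.sum_univ_succ, ← h3]
      funext i
      simp [add_assoc]
    · intro v hv w hw hvw
      simp only [Finset.coe_filter, Finset.mem_filter, Finset.mem_univ, true_and,
        Set.mem_ofPred_eq] at hv hw
      have h3 := hv.2.trans hw.2.symm
      funext i j
      have hj := congrFun hvw j
      simp only [Prod.mk.injEq] at hj
      refine Fin.cases hj.1 (fun i => ?_) i
      refine Fin.cases hj.2 (fun i => ?_) i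
      exact congrFun (congrFun h3 i) j

lemma poly_bound {σ r : ℝ} (hσ0 : 0 < σ) (hσ1 : σ < 1) (hr : 0 < r) :
    ∃ h : ℝ, 0 < h ∧ h < 1 ∧ ∃ N : ℕ, ∀ n : ℕ, N ≤ n →
      σ ^ n * ((n + 1) * (1 + n * r)) ^ 2 ≤ (2 : ℝ) ^ (-(h * (n : ℝ))) := by
  obtain ⟨τ, hτ, hτ1⟩ := exists_between (max_lt hσ1 (by norm_num : (1 / 2 : ℝ) < 1))
  obtain ⟨hτσ, hτ2⟩ := max_lt_iff.1 hτ
  have hτ0 : 0 < τ := by linarith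
  have hl2 : 0 < Real.log 2 := Real.log_pos (by norm_num)
  refine ⟨-Real.logb 2 τ, ?_, ?_, ?_⟩
  · have := Real.logb_neg (b := 2) (by norm_num) hτ0 hτ1
    linarith
  · have : Real.logb 2 (1/2) < Real.logb 2 τ :=
      Real.logb_lt_logb (by norm_num) (by norm_num) hτ2
    have e : Real.logb 2 (1/2) = -1 := by
      rw [one_div, Real.logb_inv, Real.logb_self_eq_one (by norm_num)]
    linarith
  · have hlim := tendsto_pow_const_mul_const_pow_of_abs_lt_one 4 (r := σ / τ)
      (by rw [abs_of_pos (div_pos hσ0 hτ0), div_lt_one hτ0]; exact hτσ)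
    have hC : (0 : ℝ) < 1 / (4 * (1 + r) ^ 2) := by positivity
    obtain ⟨N, hN⟩ := Filter.eventually_atTop.1 (hlim.eventually (gt_mem_nhds hC))
    refine ⟨max N 1, fun n hn => ?_⟩
    have hb := hN n (le_trans (le_max_left _ _) hn)
    have hn1 : (1 : ℝ) ≤ n := by exact_mod_cast le_trans (le_max_right _ _) hn
    have e : (2 : ℝ) ^ (-(-Real.logb 2 τ * (n : ℝ))) = τ ^ n := by
      rw [neg_mul, neg_neg, Real.rpow_mul (by norm_num),
        Real.rpow_logb (by norm_num) (by norm_num) hτ0, Real.rpow_natCast]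
    rw [e]
    have hp : ((n + 1) * (1 + n * r)) ^ 2 ≤ (n : ℝ) ^ 4 * (4 * (1 + r) ^ 2) := by
      have : ((n : ℝ) + 1) * (1 + n * r) ≤ (2 * n) * ((1 + r) * n) := by
        apply mul_le_mul <;> nlinarith
      calc _ ≤ ((2 * n) * ((1 + r) * n)) ^ 2 := by gcongr
        _ = _ := by ring
    have hd : (n : ℝ) ^ 4 * σ ^ n * (4 * (1 + r) ^ 2) ≤ τ ^ n := by
      rw [div_pow, lt_div_iff₀ (by positivity)] at hb
      have hτn := pow_pos hτ0 n
      have h3 : (n : ℝ) ^ 4 * (σ ^ n / τ ^ n) * (4 * (1 + r) ^ 2) * τ ^ n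
          = (n : ℝ) ^ 4 * σ ^ n * (4 * (1 + r) ^ 2) := by field_simp
      rw [← h3]
      nlinarith
    calc _ ≤ σ ^ n * ((n : ℝ) ^ 4 * (4 * (1 + r) ^ 2)) := by gcongr
      _ = _ := by ring
      _ ≤ _ := hd

/-- For a prime power `q ≥ 2` (realized as the cardinality of a finite field
`F`) and a constant `δ ∈ (0, 1 - 1/q)`, there is a constant `h_δ ∈ (0,1)` such that for all
sufficiently large `n` and every `ℓ` with `2 ≤ ℓ ≤ n`, the probability that the sum of `ℓ`
independent uniformly random vectors of the Hamming ball `B_q(n, ⌊δn⌋)` again lies in the ball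
is at most `2^(-h_δ n)`.  (The probability is expressed by counting: the number of `ℓ`-tuples
of ball elements whose sum lies in the ball is at most `2^(-h_δ n)` times the total number of
`ℓ`-tuples of ball elements.) -/
theorem hammingBall_sum_escape
    (q : ℕ) (hq : 2 ≤ q) (F : Type) [Field F] [Fintype F] [DecidableEq F]
    (hF : Fintype.card F = q)
    (δ : ℝ) (hδ0 : 0 < δ) (hδ1 : δ < 1 - 1 / (q : ℝ)) :
    ∃ h : ℝ, 0 < h ∧ h < 1 ∧ ∃ N : ℕ, ∀ n : ℕ, N ≤ n → ∀ ℓ : ℕ, 2 ≤ ℓ → ℓ ≤ n →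
      (((Finset.univ : Finset (Fin ℓ → Fin n → F)).filter fun v =>
          (∀ i, v i ∈ hammingBall F n ⌊δ * (n : ℝ)⌋₊) ∧
            (∑ i, v i) ∈ hammingBall F n ⌊δ * (n : ℝ)⌋₊).card : ℝ) ≤
        (2 : ℝ) ^ (-(h * (n : ℝ))) * ((hammingBall F n ⌊δ * (n : ℝ)⌋₊).card : ℝ) ^ ℓ := by
  have hq2 : (2 : ℝ) ≤ q := by exact_mod_cast hq
  have hd1 : δ < 1 := by
    have : 0 < 1 / (q : ℝ) := by positivity
    linarith
  have hq1 : 0 < (q : ℝ) - 1 := by linarith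
  obtain ⟨r, hr⟩ : ∃ r, r = δ / (1 - δ) := ⟨_, rfl⟩
  have hr0 : 0 < r := by rw [hr]; exact div_pos hδ0 (by linarith)
  obtain ⟨t, ht⟩ : ∃ t, t = r / ((q : ℝ) - 1) := ⟨_, rfl⟩
  have ht0 : 0 < t := by rw [ht]; exact div_pos hr0 hq1
  have htr : ((Fintype.card F : ℝ) - 1) * t = r := by
    rw [hF, ht]; field_simp
  have ht1 : t < 1 := by
    rw [ht, div_lt_one hq1, hr, div_lt_iff₀ (by linarith)]
    have : δ * q < q - 1 := by
      have := mul_lt_mul_of_pos_right hδ1 (by linarith : (0 : ℝ) < q)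
      rwa [sub_mul, one_mul, one_div, inv_mul_cancel₀ (by linarith)] at this
    linarith
  have hs0 : 0 < Real.sqrt t := Real.sqrt_pos.2 ht0
  have hs1 : Real.sqrt t < 1 := by rw [Real.sqrt_lt' one_pos]; simpa using ht1
  have hs2 : Real.sqrt t ^ 2 = t := Real.sq_sqrt ht0.le
  obtain ⟨σ, hσ0, hσ1, hσ⟩ := exists_sigma (F := F) hs0 hs1
  obtain ⟨h, hh0, hh1, N, hN⟩ := poly_bound hσ0 hσ1 hr0
  refine ⟨h, hh0, hh1, N, fun n hn ℓ hℓ _ => ?_⟩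
  obtain ⟨m, rfl⟩ : ∃ m, ℓ = m + 2 := ⟨ℓ - 2, by omega⟩
  have hlow := ball_lower (F := F) hδ0 hd1 hr htr ht0 n
  have hpoly := hN n hn
  generalize ⌊δ * (n : ℝ)⌋₊ = k at *
  rw [hs2, htr] at hσ
  have hT := tuple_bound (F := F) n k m
    ⌊(2 : ℝ) ^ (-(h * (n : ℝ))) * ((hammingBall F n k).card : ℝ) ^ 2⌋₊ (by
      intro b
      apply Nat.le_floor
      have hP := pair_bound hs0 hs1 n k hσ b
      have e4 : (Real.sqrt t ^ k) ^ 4 = (t ^ k) ^ 2 := by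
        rw [← hs2]; rw [Real.sqrt_sq hs0.le]; ring
      rw [e4] at hP
      have htk : 0 < (t ^ k) ^ 2 := by positivity
      refine le_of_mul_le_mul_right (hP.trans ?_) htk
      calc (σ * (1 + r) ^ 2) ^ n = σ ^ n * ((1 + r) ^ n) ^ 2 := by
            rw [mul_pow, ← pow_mul, ← pow_mul, mul_comm 2 n]
        _ ≤ σ ^ n * (((n + 1) * (1 + n * r)) *
            (((hammingBall F n k).card : ℝ) * t ^ k)) ^ 2 := by gcongr
        _ = (σ ^ n * ((n + 1) * (1 + n * r)) ^ 2) *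
            (((hammingBall F n k).card : ℝ) ^ 2 * (t ^ k) ^ 2) := by ring
        _ ≤ (2 : ℝ) ^ (-(h * (n : ℝ))) *
            (((hammingBall F n k).card : ℝ) ^ 2 * (t ^ k) ^ 2) := by gcongr
        _ = _ := by ring)
  have hT' := (Nat.cast_le (α := ℝ)).2 hT
  refine le_trans (le_of_eq ?_) (hT'.trans ?_)
  · congr!
  · push_cast
    calc _ ≤ ((2 : ℝ) ^ (-(h * (n : ℝ))) * ((hammingBall F n k).card : ℝ) ^ 2) *
          ((hammingBall F n k).card : ℝ) ^ m := by
          gcongr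
          exact Nat.floor_le (by positivity)
      _ = _ := by ring
end

section
/- Let q be a prime power and let δ ∈ (0, 1 − 1/q) be a constant. Then for all sufficiently large n (depending only on q and δ) the following holds with d = ⌊δn⌋: if k is a positive integer satisfying (q^k − 1)/(q − 1) < 1.7 · q^n / ∑_{i=0}^{d−1} C(n,i)(q−1)^i, then there exists a k-dimensional linear subspace C ⊆ 𝔽_q^n all of whose nonzero elements have Hamming weight at least d (i.e., an [n,k] linear code over 𝔽_q with minimum Hamming distance at least d). -/
open Finset
open scoped Classical

namespace GVImp

set_option linter.unusedSectionVars false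

variable {F : Type} [Field F] [Fintype F] [DecidableEq F]

/-- Sphere of radius `t`. -/
noncomputable def sph (F : Type) [Field F] [Fintype F] [DecidableEq F] (n t : ℕ) : Finset (Fin n → F) :=
  univ.filter (fun v => hammingNorm v = t)

/-- Open ball of radius `d`. -/
noncomputable def bll (F : Type) [Field F] [Fintype F] [DecidableEq F] (n d : ℕ) : Finset (Fin n → F) :=
  univ.filter (fun v => hammingNorm v < d)

lemma card_sph (n t : ℕ) : (sph F n t).card = n.choose t * (Fintype.card F - 1) ^ t := by
  have h1 := Finset.card_eq_sum_card_fiberwise (s := sph F n t)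
    (t := powersetCard t (univ : Finset (Fin n)))
    (f := fun v => univ.filter (fun i => v i ≠ 0)) (by
      intro v hv
      simp only [sph, coe_filter, mem_univ, true_and, Set.mem_ofPred_eq] at hv
      simp only [mem_coe, mem_powersetCard, subset_univ, true_and]
      simpa [hammingNorm] using hv)
  rw [h1, Finset.sum_congr rfl (g := fun _ => (Fintype.card F - 1) ^ t)]
  · simp
  intro s hs
  rw [mem_powersetCard] at hs
  have : (sph F n t).filter (fun v => univ.filter (fun i => v i ≠ 0) = s) =
      Fintype.piFinset (fun i => if i ∈ s then (univ.erase (0:F)) else {0}) := by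
    ext v
    simp only [sph, mem_filter, mem_univ, true_and, Fintype.mem_piFinset]
    constructor
    · rintro ⟨_, h⟩ i
      by_cases hi : i ∈ s
      · have := hi
        rw [← h] at this
        simpa [hi] using this
      · have := hi
        rw [← h] at this
        simpa [hi] using this
    · intro h
      have hs' : univ.filter (fun i => v i ≠ 0) = s := by
        ext i
        have := h i
        by_cases hi : i ∈ s <;> simpa [hi] using this
      refine ⟨?_, hs'⟩
      have h2 := hs.2
      rw [← hs'] at h2
      simpa [hammingNorm] using h2
  rw [this, Fintype.card_piFinset]
  have h3 : ∀ i, (if i ∈ s then (univ.erase (0:F)) else {0}).card = if i ∈ s then (Fintype.card F - 1) else 1 := by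
    intro i
    split_ifs <;> simp [card_erase_of_mem]
  simp only [h3]
  rw [Finset.prod_ite_mem, univ_inter, prod_const, hs.2]

lemma bll_eq (n d : ℕ) : bll F n d = (range d).biUnion (sph F n) := by
  ext v; simp [bll, sph]

lemma sph_disj (n : ℕ) (s : Set ℕ) : s.PairwiseDisjoint (sph F n) := by
  intro a _ b _ hab
  rw [Function.onFun, Finset.disjoint_left]
  intro v hv hv'
  simp [sph] at hv hv'
  exact hab (hv.symm.trans hv')

lemma card_bll (n d : ℕ) : (bll F n d).card = ∑ t ∈ range d, (sph F n t).card := by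
  rw [bll_eq, card_biUnion]
  intro a ha b hb hab
  exact sph_disj n Set.univ (by simp) (by simp) hab

lemma card_bll_real (n d : ℕ) : ((bll F n d).card : ℝ) =
    ∑ i ∈ range d, (n.choose i : ℝ) * ((Fintype.card F : ℝ) - 1) ^ i := by
  rw [card_bll]
  have : 1 ≤ Fintype.card F := Fintype.card_pos
  push_cast [card_sph, Nat.cast_sub this]
  rfl

lemma ball_ratio (n d : ℕ) (δ : ℝ) (hδ0 : 0 < δ) (hδ1 : δ ≤ 1) (hd : (d : ℝ) ≤ δ * n) :
    ((1 - δ) * ((Fintype.card F : ℝ) - 1) / δ) * ((bll F n d).card : ℝ) ≤ ((bll F n (d+1)).card : ℝ) := by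
  rw [card_bll_real, card_bll_real, Finset.sum_range_succ', mul_sum]
  have hq : (1:ℝ) ≤ Fintype.card F := by exact_mod_cast (Fintype.card_pos : 0 < Fintype.card F)
  have hq0 : (0:ℝ) ≤ Fintype.card F - 1 := by linarith
  have : ∀ i ∈ range d, ((1 - δ) * ((Fintype.card F : ℝ) - 1) / δ) * ((n.choose i : ℝ) * ((Fintype.card F : ℝ) - 1) ^ i) ≤
      (n.choose (i+1) : ℝ) * ((Fintype.card F : ℝ) - 1) ^ (i+1) := by
    intro i hi
    rw [mem_range] at hi
    have hi' : (i:ℝ) + 1 ≤ δ * n := le_trans (by exact_mod_cast hi) hd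
    have hin : i ≤ n := by
      have : (i:ℝ) + 1 ≤ n := hi'.trans (by nlinarith [(Nat.cast_nonneg n : (0:ℝ) ≤ n)])
      have : i + 1 ≤ n := by exact_mod_cast this
      omega
    have hc : (n.choose (i+1) : ℝ) * (i+1) = n.choose i * (n - i) := by
      have := Nat.choose_succ_right_eq n i
      have h2 : ((n.choose (i+1) * (i+1) : ℕ) : ℝ) = ((n.choose i * (n - i) : ℕ) : ℝ) := by rw [this]
      push_cast [Nat.cast_sub hin] at h2
      exact h2
    have key : (1 - δ) / δ * n.choose i ≤ n.choose (i+1) := by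
      have hpos : (0:ℝ) < i + 1 := by positivity
      rw [div_mul_eq_mul_div, div_le_iff₀ hδ0]
      refine le_of_mul_le_mul_right ?_ hpos
      have hC : (0:ℝ) ≤ n.choose i := by positivity
      have : (1-δ) * (i+1) ≤ δ * (n - i) := by nlinarith
      calc (1 - δ) * (n.choose i) * ((i:ℝ)+1) = n.choose i * ((1-δ) * (i+1)) := by ring
        _ ≤ n.choose i * (δ * (n-i)) := by gcongr
        _ = (n.choose (i+1) * (i+1)) * δ := by rw [hc]; ring
        _ = _ := by ring
    calc _ = ((1 - δ) / δ * n.choose i) * ((Fintype.card F : ℝ) - 1) ^ (i+1) := by ring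
      _ ≤ _ := by gcongr
  have := sum_le_sum this
  simp only [Nat.choose_zero_right, pow_zero]
  push_cast
  linarith

lemma ball_ratio_pow (n d m : ℕ) (δ : ℝ) (hδ0 : 0 < δ) (hδ1 : δ ≤ 1) (hd : ((d + m : ℕ) : ℝ) ≤ δ * n + 1) :
    ((1 - δ) * ((Fintype.card F : ℝ) - 1) / δ) ^ m * ((bll F n d).card : ℝ) ≤ ((bll F n (d+m)).card : ℝ) := by
  have hq : (1:ℝ) ≤ Fintype.card F := by exact_mod_cast (Fintype.card_pos : 0 < Fintype.card F)
  have hr : 0 ≤ (1 - δ) * ((Fintype.card F : ℝ) - 1) / δ := 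
    div_nonneg (mul_nonneg (by linarith) (by linarith)) hδ0.le
  induction m with
  | zero => simp
  | succ m ih =>
    push_cast at hd ih
    have h1 := ih (by linarith)
    have h2 := ball_ratio (F := F) n (d+m) δ hδ0 hδ1 (by push_cast; linarith)
    calc _ = ((1 - δ) * ((Fintype.card F : ℝ) - 1) / δ) * (((1 - δ) * ((Fintype.card F : ℝ) - 1) / δ) ^ m * ((bll F n d).card : ℝ)) := by ring
      _ ≤ _ := mul_le_mul_of_nonneg_left h1 hr
      _ ≤ _ := h2

lemma norm_smul_eq {n : ℕ} (c : F) (hc : c ≠ 0) (v : Fin n → F) : hammingNorm (c • v) = hammingNorm v := by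
  simp [hammingNorm, hc]

lemma norm_diag {n : ℕ} (c : Fin n → F) (hc : ∀ i, c i ≠ 0) (v : Fin n → F) :
    hammingNorm (fun i => c i * v i) = hammingNorm v := by
  simp [hammingNorm, hc]

lemma norm_perm {n : ℕ} (σ : Equiv.Perm (Fin n)) (v : Fin n → F) :
    hammingNorm (fun i => v (σ i)) = hammingNorm v := by
  unfold hammingNorm
  apply Finset.card_bij (fun i _ => σ i)
  · simp
  · simp
  · intro b hb
    exact ⟨σ.symm b, by simpa using hb, by simp⟩

/-- scaling symmetry -/
lemma scale_sym {n t : ℕ} (i : Fin n) (f : F → ℝ) (hf : f 0 = 0) (G : (Fin n → F) → ℝ)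
    (hG : ∀ v a, G (Function.update v i a) = G v) :
    ((Fintype.card F : ℝ) - 1) * ∑ v ∈ sph F n t, f (v i) * G v =
      (∑ a, f a) * ∑ v ∈ sph F n t, (if v i ≠ 0 then 1 else 0) * G v := by
  have h1 : ∀ c : Fˣ, ∑ v ∈ sph F n t, f (v i) * G v = ∑ v ∈ sph F n t, f (c * v i) * G v := by
    intro c
    symm
    have hne : ∀ (c : Fˣ) (v : Fin n → F), hammingNorm (Function.update v i (c * v i)) = hammingNorm v := by
      intro c v
      rw [← norm_diag (Function.update (fun _ => (1:F)) i (c:F)) _ v]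
      · congr 1
        ext j
        by_cases h : j = i
        · subst h; simp
        · simp [h]
      · intro j
        by_cases h : j = i
        · subst h; simp
        · simp [h]
    refine Finset.sum_bij' (fun v _ => Function.update v i ((c : F) * v i)) (fun v _ => Function.update v i (((c⁻¹ : Fˣ) : F) * v i)) ?_ ?_ ?_ ?_ ?_
    · intro v hv
      simp only [sph, mem_filter, mem_univ, true_and] at hv ⊢
      rw [hne, hv]
    · intro v hv
      simp only [sph, mem_filter, mem_univ, true_and] at hv ⊢
      rw [hne, hv]
    · intro v hv; simp
    · intro v hv; simp
    · intro v hv; simp [hG]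
  have h2 : ∑ c : Fˣ, ∑ v ∈ sph F n t, f (v i) * G v = ((Fintype.card F : ℝ) - 1) * ∑ v ∈ sph F n t, f (v i) * G v := by
    rw [sum_const, card_univ, Fintype.card_units, nsmul_eq_mul, Nat.cast_sub Fintype.card_pos]
    simp
  rw [← h2, Finset.sum_congr rfl (fun c _ => h1 c), sum_comm, mul_sum]
  apply sum_congr rfl
  intro v _
  rw [← sum_mul, ← mul_assoc]
  congr 1
  by_cases hv : v i = 0
  · simp [hv, hf]
  · simp only [hv, ne_eq, not_false_eq_true, if_true, mul_one]
    have h3 : ∑ c : Fˣ, f (c * v i) = ∑ c : Fˣ, f c := 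
      Fintype.sum_equiv (Equiv.mulRight (Units.mk0 (v i) hv)) _ _ (by intro c; simp)
    rw [h3]
    rw [← Finset.sum_erase univ hf]
    apply Finset.sum_bij (fun (c : Fˣ) _ => (c : F))
    · simp
    · intro a _ b _ h; exact Units.ext h
    · intro b hb; exact ⟨Units.mk0 b (by simpa using hb), by simp, by simp⟩
    · simp

/-- indicator -/
noncomputable def nz (a : F) : ℝ := if a ≠ 0 then 1 else 0

lemma sum_nz {n : ℕ} (v : Fin n → F) : ∑ i, nz (v i) = hammingNorm v := by
  simp only [nz, hammingNorm, Finset.card_filter]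
  push_cast
  rfl

lemma nz_sq (a : F) : nz a * nz a = nz a := by simp [nz]

lemma perm_sym1 {n t : ℕ} (i : Fin n) :
    n * ∑ v ∈ sph F n t, nz (v i) = t * ((sph F n t).card : ℝ) := by
  have h1 : ∀ j, ∑ v ∈ sph F n t, nz (v j) = ∑ v ∈ sph F n t, nz (v i) := by
    intro j
    refine Finset.sum_bij' (fun v _ => fun l => v (Equiv.swap i j l)) (fun v _ => fun l => v (Equiv.swap i j l)) ?_ ?_ ?_ ?_ ?_
    · intro v hv; simp only [sph, mem_filter, mem_univ, true_and, norm_perm] at hv ⊢; exact hv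
    · intro v hv; simp only [sph, mem_filter, mem_univ, true_and, norm_perm] at hv ⊢; exact hv
    · intro v hv; simp
    · intro v hv; simp
    · intro v hv; simp
  have h2 : ∑ j : Fin n, ∑ v ∈ sph F n t, nz (v j) = n * ∑ v ∈ sph F n t, nz (v i) := by
    rw [sum_congr rfl (fun j _ => h1 j)]; simp
  rw [← h2, sum_comm]
  rw [sum_congr rfl (g := fun _ => (t:ℝ))]
  · simp [mul_comm]
  · intro v hv
    simp only [sph, mem_filter, mem_univ, true_and] at hv
    rw [sum_nz, hv]

lemma perm_sym2 {n t : ℕ} (i j : Fin n) (hij : i ≠ j) :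
    ((n:ℝ) - 1) * ∑ v ∈ sph F n t, nz (v i) * nz (v j) = ((t:ℝ) - 1) * ∑ v ∈ sph F n t, nz (v i) := by
  have h1 : ∀ l ∈ univ.erase i, ∑ v ∈ sph F n t, nz (v i) * nz (v l) = ∑ v ∈ sph F n t, nz (v i) * nz (v j) := by
    intro l hl
    have hl : l ≠ i := by simpa using hl
    refine Finset.sum_bij' (fun v _ => fun m => v (Equiv.swap l j m)) (fun v _ => fun m => v (Equiv.swap l j m)) ?_ ?_ ?_ ?_ ?_
    · intro v hv; simp only [sph, mem_filter, mem_univ, true_and, norm_perm] at hv ⊢; exact hv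
    · intro v hv; simp only [sph, mem_filter, mem_univ, true_and, norm_perm] at hv ⊢; exact hv
    · intro v hv; simp
    · intro v hv; simp
    · intro v hv; simp [Equiv.swap_apply_of_ne_of_ne hl.symm hij]
  have h2 : ∑ l ∈ univ.erase i, ∑ v ∈ sph F n t, nz (v i) * nz (v l) = ((n:ℝ) - 1) * ∑ v ∈ sph F n t, nz (v i) * nz (v j) := by
    rw [sum_congr rfl h1]
    have : 1 ≤ n := by have := i.2; omega
    simp [card_erase_of_mem, Nat.cast_sub this]
  rw [← h2, sum_comm, mul_sum]
  apply sum_congr rfl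
  intro v hv
  simp only [sph, mem_filter, mem_univ, true_and] at hv
  have := sum_nz v
  rw [← Finset.add_sum_erase _ _ (mem_univ i), hv] at this
  rw [← mul_sum]
  have h3 := nz_sq (v i)
  have h4 : ∑ l ∈ univ.erase i, nz (v l) = t - nz (v i) := by linarith
  rw [h4]
  linear_combination -h3

end GVImp

namespace GVImp

set_option linter.unusedSectionVars false

variable {F : Type} [Field F] [Fintype F] [DecidableEq F]

/-- overlap function -/
noncomputable def ov (b a : F) : ℝ := nz a + (if a = -b then 1 else 0)

lemma ov_zero (b : F) (hb : b ≠ 0) : ov b 0 = 0 := by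
  simp [ov, nz, hb]

lemma ov_sum (b : F) : ∑ a, ov b a = Fintype.card F := by
  have h : ∑ a : F, nz a = (Fintype.card F : ℝ) - 1 := by
    have : ∀ a : F, nz a = 1 - (if a = 0 then 1 else 0) := by
      intro a; by_cases h : a = 0 <;> simp [nz, h]
    simp only [this, sum_sub_distrib]
    simp
  simp only [ov, sum_add_distrib, h]
  simp

lemma ov_nonneg (b a : F) : 0 ≤ ov b a := by
  unfold ov nz; split_ifs <;> norm_num

lemma ov_le (b a : F) : ov b a ≤ 2 := by
  unfold ov nz; split_ifs <;> norm_num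

/-- support -/
noncomputable def spt {n : ℕ} (u : Fin n → F) : Finset (Fin n) := univ.filter (fun i => u i ≠ 0)

lemma norm_add_eq {n : ℕ} (u v : Fin n → F) :
    (hammingNorm (u + v) : ℝ) = hammingNorm u + hammingNorm v - ∑ i ∈ spt u, ov (u i) (v i) := by
  rw [← sum_nz, ← sum_nz, ← sum_nz, spt, sum_filter, ← sum_add_distrib, ← sum_sub_distrib]
  apply sum_congr rfl
  intro i _
  by_cases h : u i = 0
  · simp [h, nz]
  · by_cases h2 : v i = - u i
    · simp [h, h2, nz, ov]
    · have : u i + v i ≠ 0 := fun h3 => h2 (by linear_combination h3)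
      simp [h, h2, nz, ov, this]

lemma card_gt_one : (1:ℝ) < Fintype.card F := by
  exact_mod_cast (Fintype.one_lt_card : 1 < Fintype.card F)

lemma mom1 {n t : ℕ} (i : Fin n) (b : F) (hb : b ≠ 0) :
    ∑ v ∈ sph F n t, ov b (v i) =
      ((Fintype.card F : ℝ) / (Fintype.card F - 1) * (t / n)) * (sph F n t).card := by
  have h1 := scale_sym (t := t) i (ov b) (ov_zero b hb) (fun _ => 1) (by simp)
  have h2 := perm_sym1 (F := F) (t := t) i
  have hq := card_gt_one (F := F)
  have hn : (0:ℝ) < n := by exact_mod_cast (Nat.pos_of_ne_zero (by rintro rfl; exact i.elim0))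
  simp only [mul_one, ov_sum] at h1
  change _ = _ * ∑ v ∈ sph F n t, nz (v i) at h1
  have hq' : (Fintype.card F : ℝ) - 1 ≠ 0 := by linarith
  field_simp
  linear_combination (n:ℝ) * h1 + (Fintype.card F : ℝ) * h2

lemma mom2 {n t : ℕ} (ht : t ≤ n) (i j : Fin n) (hij : i ≠ j) (b c : F) (hb : b ≠ 0) (hc : c ≠ 0) :
    ∑ v ∈ sph F n t, ov b (v i) * ov c (v j) ≤
      ((Fintype.card F : ℝ) / (Fintype.card F - 1) * (t / n)) ^ 2 * (sph F n t).card := by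
  have h1 := scale_sym (t := t) i (ov b) (ov_zero b hb) (fun v => ov c (v j)) (by simp [hij.symm])
  have h1' := scale_sym (t := t) j (ov c) (ov_zero c hc) (fun v => nz (v i)) (by simp [hij])
  have h2 := perm_sym1 (F := F) (t := t) i
  have h3 := perm_sym2 (F := F) (t := t) i j hij
  have hq := card_gt_one (F := F)
  have hn : (1:ℝ) < n := by
    have := i.2
    have := j.2
    have h : (i:ℕ) ≠ j := fun h => hij (Fin.ext h)
    exact_mod_cast (by omega : 1 < n)
  simp only [ov_sum] at h1 h1'
  change _ = _ * ∑ v ∈ sph F n t, nz (v i) * _ at h1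
  change _ = _ * ∑ v ∈ sph F n t, nz (v j) * _ at h1'
  set A := ∑ v ∈ sph F n t, ov b (v i) * ov c (v j)
  have hBB : ∑ v ∈ sph F n t, nz (v i) * ov c (v j) = ∑ v ∈ sph F n t, ov c (v j) * nz (v i) :=
    sum_congr rfl (fun _ _ => mul_comm _ _)
  have hDD' : ∑ v ∈ sph F n t, nz (v j) * nz (v i) = ∑ v ∈ sph F n t, nz (v i) * nz (v j) :=
    sum_congr rfl (fun _ _ => mul_comm _ _)
  rw [hBB] at h1
  rw [hDD'] at h1'
  set B := ∑ v ∈ sph F n t, ov c (v j) * nz (v i)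
  set D := ∑ v ∈ sph F n t, nz (v i) * nz (v j) with hD
  set E := ∑ v ∈ sph F n t, nz (v i)
  set S := ((sph F n t).card : ℝ)
  set q := (Fintype.card F : ℝ)
  have hA : A = (q/(q-1))^2 * D := by
    have : q - 1 ≠ 0 := by linarith
    field_simp
    linear_combination (q-1) * h1 + q * h1'
  have hDD : D ≤ (t/n)^2 * S := by
    have hS : 0 ≤ S := by positivity
    have ht' : (t:ℝ) ≤ n := by exact_mod_cast ht
    have hEE : E = t/n * S := by field_simp; linarith
    have hD2 : D = (t-1)/(n-1) * E := by
      have : (n:ℝ) - 1 ≠ 0 := by linarith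
      field_simp; linarith
    rw [hD2, hEE, ← mul_assoc, sq]
    have : ((t:ℝ)-1)/(n-1) ≤ t/n := by
      rw [div_le_div_iff₀ (by linarith) (by linarith)]
      nlinarith
    gcongr
  rw [hA, mul_pow, mul_assoc]
  gcongr

lemma variance_bd {n t : ℕ} (ht : t ≤ n) (u : Fin n → F) :
    ∑ v ∈ sph F n t, ((∑ i ∈ spt u, ov (u i) (v i)) -
      (hammingNorm u : ℝ) * ((Fintype.card F : ℝ) / (Fintype.card F - 1) * (t / n))) ^ 2 ≤
      (4 * (n:ℝ) * ((sph F n t).card : ℝ) : ℝ) := by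
  set μ := ((Fintype.card F : ℝ) / (Fintype.card F - 1) * (t / n))
  have hs : ((spt u).card : ℝ) = hammingNorm u := by simp [spt, hammingNorm]
  have hsn : (hammingNorm u : ℝ) ≤ n := by
    have := hammingNorm_le_card_fintype (x := u)
    rw [Fintype.card_fin] at this
    exact_mod_cast this
  set s := (hammingNorm u : ℝ)
  have hS : 0 ≤ ((sph F n t).card : ℝ) := by positivity
  set S := ((sph F n t).card : ℝ) with hSdef
  have hU : ∀ i ∈ spt u, u i ≠ 0 := by intro i hi; simpa [spt] using hi
  have e1 : ∑ v ∈ sph F n t, (∑ i ∈ spt u, ov (u i) (v i)) = s * μ * S := by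
    rw [sum_comm, sum_congr rfl (fun i hi => mom1 i (u i) (hU i hi)), sum_const, nsmul_eq_mul, hs]
    ring
  have e2 : ∑ v ∈ sph F n t, (∑ i ∈ spt u, ov (u i) (v i)) ^ 2 ≤ (s ^ 2 * μ ^ 2 + 4 * s) * S := by
    have : ∀ i ∈ spt u, ∀ j ∈ spt u, ∑ v ∈ sph F n t, ov (u i) (v i) * ov (u j) (v j) ≤
        μ ^ 2 * S + if i = j then 4 * S else 0 := by
      intro i hi j hj
      by_cases hij : i = j
      · subst hij
        have : ∑ v ∈ sph F n t, ov (u i) (v i) * ov (u i) (v i) ≤ ∑ v ∈ sph F n t, (4:ℝ) := by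
          apply sum_le_sum
          intro v _
          nlinarith [ov_nonneg (u i) (v i), ov_le (u i) (v i)]
        rw [sum_const, nsmul_eq_mul] at this
        have h0 : 0 ≤ μ ^ 2 * S := by positivity
        simp only [if_true]
        linarith
      · simp only [hij, if_false, add_zero]
        exact mom2 ht i j hij _ _ (hU i hi) (hU j hj)
    simp only [sq (∑ i ∈ spt u, _), sum_mul_sum]
    rw [sum_comm, sum_congr rfl (fun i _ => sum_comm)]
    refine (sum_le_sum (fun i hi => sum_le_sum (this i hi))).trans (le_of_eq ?_)
    simp only [sum_add_distrib, sum_const, nsmul_eq_mul, hs, sum_ite_eq]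
    rw [sum_congr rfl (fun i hi => if_pos hi), sum_const, nsmul_eq_mul, hs]
    ring
  have e3 : ∀ v : Fin n → F, ((∑ i ∈ spt u, ov (u i) (v i)) - s * μ) ^ 2 =
      (∑ i ∈ spt u, ov (u i) (v i)) ^ 2 - 2 * (s * μ) * (∑ i ∈ spt u, ov (u i) (v i)) + (s * μ)^2 := by
    intro v; ring
  simp only [e3, sum_add_distrib, sum_sub_distrib, ← mul_sum, e1]
  rw [sum_const, nsmul_eq_mul, ← hSdef]
  have : s * S ≤ n * S := by gcongr
  nlinarith

/-- few bad vectors on a sphere -/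
lemma bad_sph {n t d m : ℕ} (δ : ℝ) (hdn : (d:ℝ) ≤ δ * n) (ht : t ≤ n) (htd : t < d) (htm : d ≤ t + m)
    (u : Fin n → F) (hu : hammingNorm u < d) (hum : d ≤ hammingNorm u + m) (c : ℝ) (hc : 0 < c)
    (hgap : c * n ≤ d - 2 * m - d * (δ * ((Fintype.card F : ℝ) / (Fintype.card F - 1)))) :
    (((sph F n t).filter (fun v => hammingNorm (u + v) < d)).card : ℝ) * (c ^ 2 * n) ≤
      4 * (sph F n t).card := by
  have hn0 : 0 < n := by
    rcases Nat.eq_zero_or_pos n with rfl | h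
    · have : (d:ℝ) ≤ 0 := by simpa using hdn
      have : d ≤ 0 := by exact_mod_cast this
      omega
    · exact h
  have hn : (0:ℝ) < n := by exact_mod_cast hn0
  have hq := card_gt_one (F := F)
  have hv := variance_bd ht u
  set κ := (Fintype.card F : ℝ) / (Fintype.card F - 1) with hκ
  have hκ0 : 0 ≤ κ := div_nonneg (by linarith) (by linarith)
  have hlow : ∑ v ∈ (sph F n t).filter (fun v => hammingNorm (u + v) < d), (c * n)^2 ≤
      ∑ v ∈ sph F n t, ((∑ i ∈ spt u, ov (u i) (v i)) - hammingNorm u * (κ * (t / n))) ^ 2 := by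
    refine le_trans (sum_le_sum ?_) (sum_le_sum_of_subset_of_nonneg (filter_subset _ _) (fun _ _ _ => sq_nonneg _))
    intro v hv
    rw [mem_filter] at hv
    simp only [sph, mem_filter, mem_univ, true_and] at hv
    have h1 := norm_add_eq u v
    rw [hv.1] at h1
    have h2 : (hammingNorm (u+v) : ℝ) ≤ d := by exact_mod_cast hv.2.le
    have h3 : (hammingNorm u : ℝ) ≤ d := by exact_mod_cast hu.le
    have h4 : (d:ℝ) ≤ hammingNorm u + m := by exact_mod_cast hum
    have h5 : (d:ℝ) ≤ t + m := by exact_mod_cast htm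
    have h6 : (t:ℝ) / n ≤ δ := by
      rw [div_le_iff₀ hn]
      exact le_trans (by exact_mod_cast htd.le) hdn
    have h7 : hammingNorm u * (κ * (t / n)) ≤ d * (δ * κ) := by
      rw [mul_comm δ]
      gcongr
    have h8 : c * n ≤ (∑ i ∈ spt u, ov (u i) (v i)) - hammingNorm u * (κ * (t / n)) := by linarith
    have : 0 ≤ c * n := by positivity
    gcongr
  rw [sum_const, nsmul_eq_mul] at hlow
  have := hlow.trans hv
  refine le_of_mul_le_mul_right ?_ hn
  nlinarith

end GVImp

namespace GVImp

set_option linter.unusedSectionVars false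

variable {F : Type} [Field F] [Fintype F] [DecidableEq F]

lemma mem_bll {n d : ℕ} {v : Fin n → F} : v ∈ bll F n d ↔ hammingNorm v < d := by simp [bll]

lemma bad_ball {n d m : ℕ} (δ : ℝ) (hdn : (d:ℝ) ≤ δ * n) (hd : d ≤ n) (hmd : m ≤ d)
    (u : Fin n → F) (hu : hammingNorm u < d) (hum : d ≤ hammingNorm u + m) (c : ℝ) (hc : 0 < c)
    (hgap : c * n ≤ d - 2 * m - d * (δ * ((Fintype.card F : ℝ) / (Fintype.card F - 1)))) :
    (((bll F n d).filter (fun v => u + v ∈ bll F n d)).card : ℝ) ≤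
      (bll F n (d - m)).card + 4 / (c ^ 2 * n) * (bll F n d).card := by
  have hn : (0:ℝ) < n := by exact_mod_cast (by omega : 0 < n)
  have hsub : (bll F n d).filter (fun v => u + v ∈ bll F n d) ⊆
      bll F n (d - m) ∪ (Finset.Ico (d-m) d).biUnion (fun t => (sph F n t).filter (fun v => hammingNorm (u + v) < d)) := by
    intro v hv
    rw [mem_filter, mem_bll, mem_bll] at hv
    rw [mem_union, mem_bll]
    by_cases h : hammingNorm v < d - m
    · exact Or.inl h
    · right
      simp only [mem_biUnion, mem_Ico, mem_filter, sph, mem_univ, true_and]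
      exact ⟨hammingNorm v, ⟨by omega, hv.1⟩, rfl, hv.2⟩
  have h1 := (card_le_card hsub).trans (card_union_le _ _)
  have h2 := h1.trans (Nat.add_le_add_left card_biUnion_le _)
  have h3 : (((bll F n d).filter (fun v => u + v ∈ bll F n d)).card : ℝ) ≤ (bll F n (d - m)).card +
     ∑ t ∈ Finset.Ico (d-m) d, (((sph F n t).filter (fun v => hammingNorm (u + v) < d)).card : ℝ) := by
    exact_mod_cast h2
  refine h3.trans ?_
  gcongr
  have h4 : ∀ t ∈ Finset.Ico (d-m) d, (((sph F n t).filter (fun v => hammingNorm (u + v) < d)).card : ℝ) ≤ 4 / (c ^ 2 * n) * (sph F n t).card := by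
    intro t ht
    rw [mem_Ico] at ht
    have := bad_sph δ hdn (by omega : t ≤ n) ht.2 (by omega) u hu hum c hc hgap
    rw [div_mul_eq_mul_div, le_div_iff₀ (by positivity)]
    exact this
  refine (sum_le_sum h4).trans ?_
  rw [← mul_sum]
  gcongr
  rw [card_bll]
  push_cast
  apply sum_le_sum_of_subset_of_nonneg
  · intro t ht; rw [mem_Ico] at ht; simp [ht.2]
  · intros; positivity

/-- number of triples -/
noncomputable def trip (F : Type) [Field F] [Fintype F] [DecidableEq F] (n d : ℕ) : ℕ :=
  ((bll F n d ×ˢ bll F n d).filter (fun p => p.1 + p.2 ∈ bll F n d)).card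

lemma trip_eq (n d : ℕ) : (trip F n d : ℝ) = ∑ u ∈ bll F n d, (((bll F n d).filter (fun v => u + v ∈ bll F n d)).card : ℝ) := by
  unfold trip
  rw [card_filter, sum_product]
  push_cast
  apply sum_congr rfl
  intro u _
  rw [card_filter]
  push_cast
  rfl

lemma trip_le {n d m : ℕ} (δ : ℝ) (hdn : (d:ℝ) ≤ δ * n) (hd : d ≤ n) (hmd : m ≤ d)
    (c : ℝ) (hc : 0 < c)
    (hgap : c * n ≤ d - 2 * m - d * (δ * ((Fintype.card F : ℝ) / (Fintype.card F - 1)))) :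
    (trip F n d : ℝ) ≤ (2 * (bll F n (d - m)).card + 4 / (c ^ 2 * n) * (bll F n d).card) * (bll F n d).card := by
  rw [trip_eq]
  set V := ((bll F n d).card : ℝ) with hV
  set A := ((bll F n (d-m)).card : ℝ) with hA
  have h1 : ∀ u ∈ bll F n d, (((bll F n d).filter (fun v => u + v ∈ bll F n d)).card : ℝ) ≤
      (A + 4 / (c ^ 2 * n) * V) + (if u ∈ bll F n (d - m) then V else 0) := by
    intro u hu
    rw [mem_bll] at hu
    have h0 : 0 ≤ 4 / (c ^ 2 * n) * V := by positivity
    have hA0 : 0 ≤ A := by positivity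
    by_cases h : u ∈ bll F n (d - m)
    · rw [if_pos h]
      have : (((bll F n d).filter (fun v => u + v ∈ bll F n d)).card : ℝ) ≤ V := by
        rw [hV]; exact_mod_cast card_filter_le _ _
      linarith
    · rw [if_neg h, add_zero]
      rw [mem_bll] at h
      exact bad_ball δ hdn hd hmd u hu (by omega) c hc hgap
  refine (sum_le_sum h1).trans ?_
  rw [sum_add_distrib, sum_const, nsmul_eq_mul, ← sum_filter, sum_const, nsmul_eq_mul, ← hV]
  have h2 : (((bll F n d).filter (fun u => u ∈ bll F n (d-m))).card : ℝ) ≤ A := by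
    rw [hA]
    exact_mod_cast card_le_card (fun u hu => (mem_filter.1 hu).2)
  have hV0 : 0 ≤ V := by positivity
  nlinarith

lemma ratio_gt_one (δ : ℝ) (hδ0 : 0 < δ) (hδ1 : δ < 1 - 1 / (Fintype.card F : ℝ)) :
    1 < (1 - δ) * ((Fintype.card F : ℝ) - 1) / δ := by
  have hq := card_gt_one (F := F)
  rw [lt_div_iff₀ hδ0]
  have : δ * Fintype.card F < Fintype.card F - 1 := by
    calc δ * Fintype.card F < (1 - 1 / (Fintype.card F : ℝ)) * Fintype.card F := by gcongr
      _ = _ := by field_simp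
  nlinarith

lemma exists_pow_big (r : ℝ) (hr : 1 < r) (η : ℝ) (hη : 0 < η) :
    ∃ m : ℕ, ∀ x y : ℝ, r ^ m * x ≤ y → 0 ≤ y → x ≤ η * y := by
  obtain ⟨m, hm⟩ := pow_unbounded_of_one_lt (1/η) hr
  refine ⟨m, fun x y h hy => ?_⟩
  have hp : 0 < r ^ m := by positivity
  rw [div_lt_iff₀ hη] at hm
  by_cases hx : x ≤ 0
  · exact hx.trans (by positivity)
  · push Not at hx
    nlinarith

lemma asymp (δ : ℝ) (hδ0 : 0 < δ) (hδ1 : δ < 1 - 1 / (Fintype.card F : ℝ)) (η : ℝ) (hη : 0 < η) :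
    ∃ N : ℕ, ∀ n : ℕ, N ≤ n → 1 ≤ ⌊δ * (n:ℝ)⌋₊ ∧
      ((bll F n ⌊δ * (n:ℝ)⌋₊).card : ℝ) ≤ η * (Fintype.card F : ℝ) ^ n ∧
      (trip F n ⌊δ * (n:ℝ)⌋₊ : ℝ) ≤ η * ((bll F n ⌊δ * (n:ℝ)⌋₊).card : ℝ) ^ 2 := by
  have hq := card_gt_one (F := F)
  set q := (Fintype.card F : ℝ) with hqdef
  have hδlt : δ < 1 := by
    have : 0 < 1 / q := by positivity
    linarith
  set δ' := (δ + (1 - 1/q)) / 2 with hδ'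
  have hδ'1 : δ' < 1 - 1/q := by rw [hδ']; linarith
  have hδ'2 : δ < δ' := by rw [hδ']; linarith
  have hδ'lt : δ' < 1 := by
    have : 0 < 1 / q := by positivity
    linarith
  obtain ⟨m, hm⟩ := exists_pow_big _ (ratio_gt_one (F := F) δ hδ0 hδ1) (η/4) (by positivity)
  obtain ⟨m', hm'⟩ := exists_pow_big _ (ratio_gt_one (F := F) δ' (hδ0.trans hδ'2) hδ'1) η hη
  set κ := q / (q - 1) with hκ
  have hθ : δ * κ < 1 := by
    rw [hκ, ← mul_div_assoc, div_lt_one (by linarith)]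
    calc δ * q < (1 - 1 / q) * q := by gcongr
      _ = _ := by field_simp
  set c := δ * (1 - δ * κ) / 2 with hcdef
  have hc : 0 < c := by
    have : 0 < 1 - δ * κ := by linarith
    positivity
  have hθ0 : 0 ≤ δ * κ := mul_nonneg hδ0.le (div_nonneg (by linarith) (by linarith))
  obtain ⟨N, hN⟩ := exists_nat_ge ((2 * m + 1) / c + (m + 1) / δ + m' / (δ' - δ) + 8 / (c ^ 2 * η) + 1)
  refine ⟨N, fun n hn => ?_⟩
  have hnN : (N:ℝ) ≤ n := by exact_mod_cast hn
  have p1 : 0 ≤ (2 * (m:ℝ) + 1) / c := by positivity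
  have p2 : 0 ≤ ((m:ℝ) + 1) / δ := by positivity
  have p3 : 0 ≤ (m':ℝ) / (δ' - δ) := div_nonneg (by positivity) (by linarith)
  have p4 : 0 ≤ 8 / (c ^ 2 * η) := by positivity
  have hn0 : (0:ℝ) < n := by linarith
  have q1 : (2 * (m:ℝ) + 1) ≤ n * c := by rw [← div_le_iff₀ hc]; linarith
  have q2 : ((m:ℝ) + 1) ≤ n * δ := by rw [← div_le_iff₀ hδ0]; linarith
  have q3 : (m':ℝ) ≤ n * (δ' - δ) := by rw [← div_le_iff₀ (by linarith)]; linarith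
  have q4 : 8 ≤ n * (c ^ 2 * η) := by rw [← div_le_iff₀ (by positivity)]; linarith
  set d := ⌊δ * (n:ℝ)⌋₊ with hd
  have hd1 : (d:ℝ) ≤ δ * n := Nat.floor_le (by positivity)
  have hd2 : δ * n < d + 1 := Nat.lt_floor_add_one _
  have hdm : m + 1 ≤ d := by
    rw [hd]; apply Nat.le_floor; push_cast; linarith
  have hdn : d ≤ n := by
    have : (d:ℝ) ≤ n := hd1.trans (by nlinarith)
    exact_mod_cast this
  refine ⟨by omega, ?_, ?_⟩
  · apply hm' _ _ _ (by positivity)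
    refine (ball_ratio_pow n d m' δ' (hδ0.trans hδ'2) hδ'lt.le (by push_cast; linarith)).trans ?_
    have := card_le_univ (bll F n (d + m'))
    rw [Fintype.card_fun, Fintype.card_fin] at this
    rw [hqdef]
    exact_mod_cast this
  · have hdd : d - m + m = d := by omega
    have h1 := ball_ratio_pow (F := F) n (d-m) m δ hδ0 hδlt.le (by rw [hdd]; linarith)
    rw [hdd] at h1
    have h2 := hm _ _ h1 (by positivity)
    have h3 := trip_le (F := F) (m := m) δ hd1 hdn (by omega) c hc (by
      rw [← hqdef, ← hκ]
      have : (δ * n - 1) * (1 - δ * κ) ≤ d * (1 - δ * κ) := by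
        apply mul_le_mul_of_nonneg_right <;> linarith
      have hcc : 2 * c = δ * (1 - δ * κ) := by rw [hcdef]; ring
      nlinarith)
    refine h3.trans ?_
    set V := ((bll F n d).card : ℝ)
    have hV0 : 0 ≤ V := by positivity
    have h4 : 4 / (c ^ 2 * n) ≤ η / 2 := by
      rw [div_le_iff₀ (by positivity)]; nlinarith
    calc _ ≤ (2 * (η/4 * V) + η/2 * V) * V := by gcongr
      _ = _ := by ring

end GVImp

namespace GVImp

set_option linter.unusedSectionVars false

lemma fiber_count {A B : Type*} [AddCommGroup A] [AddCommGroup B] [Fintype A] [Fintype B]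
    (φ : A →+ B) (hφ : Function.Surjective φ) (T : Finset B) :
    (∑ a : A, if φ a ∈ T then (1:ℝ) else 0) = (T.card : ℝ) / (Fintype.card B) * Fintype.card A := by
  have hfib : ∀ b : B, (univ.filter (fun a => φ a = b)).card = (univ.filter (fun a => φ a = 0)).card := by
    intro b
    obtain ⟨a0, ha0⟩ := hφ b
    apply Finset.card_bij (fun a _ => a - a0)
    · intro a ha; simp at ha; simp [ha, ha0]
    · intro a _ a' _ h; simpa using h
    · intro a ha; simp at ha; exact ⟨a + a0, by simp [ha, ha0], by simp⟩
  set K := (univ.filter (fun a => φ a = 0)).card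
  have h1 : ∀ T : Finset B, (univ.filter (fun a => φ a ∈ T)).card = T.card * K := by
    intro T
    rw [Finset.card_eq_sum_card_fiberwise (s := univ.filter (fun a => φ a ∈ T)) (t := T) (f := φ)
      (by intro a ha; simpa using ha)]
    rw [sum_congr rfl (g := fun _ => K)]
    · simp
    · intro b hb
      rw [← hfib b]
      congr 1
      ext a
      simp only [mem_filter, mem_univ, true_and]
      constructor
      · exact fun h => h.2
      · intro h; exact ⟨h ▸ hb, h⟩
  have h2 := h1 T
  have h3 := h1 univ
  simp only [mem_univ, filter_true, card_univ] at h3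
  rw [← natCast_card_filter, h2, h3]
  have : (Fintype.card B : ℝ) ≠ 0 := by exact_mod_cast Fintype.card_ne_zero
  push_cast
  field_simp

section ext
variable {F V W : Type*} [Field F] [AddCommGroup V] [AddCommGroup W] [Module F V] [Module F W]

lemma exists_map {ι : Type*} (a : ι → V) (ha : LinearIndependent F a) (w : ι → W) :
    ∃ G : V →ₗ[F] W, ∀ i, G (a i) = w i := by
  obtain ⟨G, hG⟩ := LinearMap.exists_extend ((Module.Basis.span ha).constr F w)
  refine ⟨G, fun i => ?_⟩
  have h1 : (Module.Basis.span ha).constr F w (Module.Basis.span ha i) = w i := Module.Basis.constr_basis _ _ _ _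
  rw [← hG] at h1
  simpa [Module.Basis.span_apply] using h1

/-- evaluation at one point -/
def ev1 (a : V) : (V →ₗ[F] W) →+ W where
  toFun G := G a
  map_zero' := rfl
  map_add' _ _ := rfl

/-- evaluation at two points -/
def ev2 (a b : V) : (V →ₗ[F] W) →+ W × W where
  toFun G := (G a, G b)
  map_zero' := rfl
  map_add' _ _ := rfl

/-- evaluation at three points -/
def ev3 (a b c : V) : (V →ₗ[F] W) →+ W × W × W where
  toFun G := (G a, G b, G c)
  map_zero' := rfl
  map_add' _ _ := rfl

lemma ev1_surj (a : V) (ha : a ≠ 0) : Function.Surjective (ev1 (F := F) (W := W) a) := by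
  intro w
  obtain ⟨G, hG⟩ := exists_map (F := F) ![a] (LinearIndependent.of_subsingleton (0 : Fin 1) (by simpa using ha)) ![w]
  exact ⟨G, hG 0⟩

lemma ev2_surj (a b : V) (h : LinearIndependent F ![a, b]) : Function.Surjective (ev2 (F := F) (W := W) a b) := by
  rintro ⟨w1, w2⟩
  obtain ⟨G, hG⟩ := exists_map (F := F) ![a, b] h ![w1, w2]
  exact ⟨G, Prod.ext (hG 0) (hG 1)⟩

lemma ev3_surj (a b c : V) (h : LinearIndependent F ![a, b, c]) : Function.Surjective (ev3 (F := F) (W := W) a b c) := by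
  rintro ⟨w1, w2, w3⟩
  obtain ⟨G, hG⟩ := exists_map (F := F) ![a, b, c] h ![w1, w2, w3]
  exact ⟨G, Prod.ext (hG 0) (Prod.ext (hG 1) (hG 2))⟩
end ext

section main
variable {F : Type} [Field F] [Fintype F] [DecidableEq F] {n k d : ℕ}

noncomputable instance instFL : Fintype ((Fin k → F) →ₗ[F] (Fin n → F)) :=
  @Fintype.ofFinite _ (DFunLike.finite _)

noncomputable instance instFP : Fintype (Projectivization F (Fin k → F)) := Fintype.ofFinite _

/-- indicator that a point is mapped to the ball -/
noncomputable def ind (d : ℕ) (p : Projectivization F (Fin k → F)) (G : (Fin k → F) →ₗ[F] (Fin n → F)) : ℝ :=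
  if G p.rep ∈ bll F n d then 1 else 0

/-- density of the ball -/
noncomputable def bt (F : Type) [Field F] [Fintype F] [DecidableEq F] (n d : ℕ) : ℝ :=
  (bll F n d).card / (Fintype.card F : ℝ) ^ n

/-- number of maps -/
noncomputable def NL (F : Type) [Field F] [Fintype F] [DecidableEq F] (n k : ℕ) : ℝ :=
  Fintype.card ((Fin k → F) →ₗ[F] (Fin n → F))

lemma cardW : ((Fintype.card (Fin n → F) : ℕ) : ℝ) = (Fintype.card F : ℝ) ^ n := by
  rw [Fintype.card_fun, Fintype.card_fin]; push_cast; rfl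

lemma ind_sq (p : Projectivization F (Fin k → F)) (G : (Fin k → F) →ₗ[F] (Fin n → F)) :
    ind d p G * ind d p G = ind d p G := by simp [ind]

lemma E1 (p : Projectivization F (Fin k → F)) :
    ∑ G : (Fin k → F) →ₗ[F] (Fin n → F), ind d p G = bt F n d * NL F n k := by
  have := fiber_count _ (ev1_surj (F := F) (W := Fin n → F) p.rep p.rep_nonzero) (bll F n d)
  rw [cardW] at this
  refine Eq.trans ?_ this
  apply sum_congr rfl
  intro G _
  unfold ind
  congr

lemma E2 (p p' : Projectivization F (Fin k → F)) (h : p ≠ p') :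
    ∑ G : (Fin k → F) →ₗ[F] (Fin n → F), ind d p G * ind d p' G = bt F n d ^ 2 * NL F n k := by
  have := fiber_count _ (ev2_surj (F := F) (W := Fin n → F) p.rep p'.rep
    (Projectivization.linearIndependent_pair_iff_ne.2 h)) (bll F n d ×ˢ bll F n d)
  rw [Fintype.card_prod, card_product] at this
  push_cast [cardW] at this
  convert this using 1
  · apply sum_congr rfl
    intro G _
    simp only [ind, ev2, mem_product, AddMonoidHom.coe_mk, ZeroHom.coe_mk, ite_and, ite_mul, one_mul, zero_mul]
  · unfold bt NL; ring

lemma E3 (p p' p'' : Projectivization F (Fin k → F)) (h : LinearIndependent F ![p.rep, p'.rep, p''.rep]) :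
    ∑ G : (Fin k → F) →ₗ[F] (Fin n → F), ind d p G * ind d p' G * ind d p'' G = bt F n d ^ 3 * NL F n k := by
  have := fiber_count _ (ev3_surj (F := F) (W := Fin n → F) p.rep p'.rep p''.rep h)
    (bll F n d ×ˢ bll F n d ×ˢ bll F n d)
  rw [Fintype.card_prod, Fintype.card_prod, card_product, card_product] at this
  push_cast [cardW] at this
  convert this using 1
  · apply sum_congr rfl
    intro G _
    simp only [ind, ev3, mem_product, AddMonoidHom.coe_mk, ZeroHom.coe_mk, ite_and, ite_mul, one_mul, zero_mul]
  · unfold bt NL; ring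

lemma trip_scale (α β : F) (hα : α ≠ 0) (hβ : β ≠ 0) :
    ((bll F n d ×ˢ bll F n d).filter (fun p => α • p.1 + β • p.2 ∈ bll F n d)).card = trip F n d := by
  unfold trip
  apply Finset.card_bij (fun p _ => (α • p.1, β • p.2))
  · intro p hp
    simp only [mem_filter, mem_product, mem_bll, norm_smul_eq _ hα, norm_smul_eq _ hβ] at hp ⊢
    exact hp
  · rintro ⟨a, b⟩ _ ⟨a', b'⟩ _ h
    simp only [Prod.mk.injEq] at h
    exact Prod.ext (smul_right_injective _ hα h.1) (smul_right_injective _ hβ h.2)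
  · rintro ⟨a, b⟩ h
    refine ⟨(α⁻¹ • a, β⁻¹ • b), ?_, ?_⟩
    · simp only [mem_filter, mem_product, mem_bll, norm_smul_eq _ (inv_ne_zero hα), norm_smul_eq _ (inv_ne_zero hβ),
        smul_inv_smul₀ hα, smul_inv_smul₀ hβ] at h ⊢
      exact h
    · simp [smul_inv_smul₀ hα, smul_inv_smul₀ hβ]

lemma E3dep (p p' p'' : Projectivization F (Fin k → F)) (h : p ≠ p') (α β : F) (hα : α ≠ 0) (hβ : β ≠ 0)
    (hp : p''.rep = α • p.rep + β • p'.rep) (η : ℝ) (hη : (trip F n d : ℝ) ≤ η * ((bll F n d).card : ℝ) ^ 2) :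
    ∑ G : (Fin k → F) →ₗ[F] (Fin n → F), ind d p G * ind d p' G * ind d p'' G ≤ η * bt F n d ^ 2 * NL F n k := by
  have := fiber_count _ (ev2_surj (F := F) (W := Fin n → F) p.rep p'.rep
    (Projectivization.linearIndependent_pair_iff_ne.2 h))
    ((bll F n d ×ˢ bll F n d).filter (fun p => α • p.1 + β • p.2 ∈ bll F n d))
  rw [Fintype.card_prod, trip_scale α β hα hβ] at this
  push_cast [cardW] at this
  have hq := card_gt_one (F := F)
  calc _ = _ := ?_
    _ = _ := this
    _ ≤ η * ((bll F n d).card : ℝ) ^ 2 / ((Fintype.card F : ℝ) ^ n * (Fintype.card F : ℝ) ^ n) * NL F n k := by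
      unfold NL; gcongr
    _ = _ := by unfold bt; ring
  apply sum_congr rfl
  intro G _
  simp only [ind, hp, ev2, mem_filter, mem_product, AddMonoidHom.coe_mk, ZeroHom.coe_mk, ite_and, ite_mul, one_mul, zero_mul, map_add, map_smul]

lemma dep_or (p p' p'' : Projectivization F (Fin k → F)) (h : p ≠ p') (h1 : p'' ≠ p) (h2 : p'' ≠ p') :
    LinearIndependent F ![p.rep, p'.rep, p''.rep] ∨ ∃ α β : F, α ≠ 0 ∧ β ≠ 0 ∧ p''.rep = α • p.rep + β • p'.rep := by
  by_cases hc : p''.rep ∈ Submodule.span F {p.rep, p'.rep}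
  · right
    obtain ⟨α, β, hab⟩ := Submodule.mem_span_pair.1 hc
    refine ⟨α, β, ?_, ?_, hab.symm⟩
    · rintro rfl
      have hli := Projectivization.linearIndependent_pair_iff_ne.2 h2
      rw [LinearIndependent.pair_iff] at hli
      have := hli (-1) β (by rw [← hab]; simp)
      simp at this
    · rintro rfl
      have hli := Projectivization.linearIndependent_pair_iff_ne.2 h1
      rw [LinearIndependent.pair_iff] at hli
      have := hli (-1) α (by rw [← hab]; simp)
      simp at this
  · left
    have hli := Projectivization.linearIndependent_pair_iff_ne.2 h
    have h3 : LinearIndependent F (Fin.snoc ![p.rep, p'.rep] p''.rep : Fin 3 → _) :=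
      linearIndependent_finSnoc.2 ⟨hli, by simpa [Set.pair_comm] using hc⟩
    convert h3 using 1
    ext i
    fin_cases i <;> rfl

lemma E3sum (p p' : Projectivization F (Fin k → F)) (h : p ≠ p')
    (η : ℝ) (hη0 : 0 ≤ η) (hη : (trip F n d : ℝ) ≤ η * ((bll F n d).card : ℝ) ^ 2) :
    ∑ p'' : Projectivization F (Fin k → F), ∑ G : (Fin k → F) →ₗ[F] (Fin n → F), ind d p G * ind d p' G * ind d p'' G ≤
      (2 * bt F n d ^ 2 + Fintype.card (Projectivization F (Fin k → F)) * bt F n d ^ 3 +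
        (Fintype.card F : ℝ) ^ 2 * (η * bt F n d ^ 2)) * NL F n k := by
  set b := bt F n d with hb
  have hb0 : 0 ≤ b := by rw [hb]; unfold bt; positivity
  have hN0 : 0 ≤ NL F n k := by unfold NL; positivity
  set N := NL F n k
  set D : Finset (Projectivization F (Fin k → F)) :=
    univ.filter (fun p'' => ∃ α β : F, α ≠ 0 ∧ β ≠ 0 ∧ p''.rep = α • p.rep + β • p'.rep) with hD
  have hDc : (D.card : ℝ) ≤ (Fintype.card F : ℝ) ^ 2 := by
    have h1 : (D.image (fun p => p.rep)).card ≤ (univ : Finset (F × F)).card := by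
      refine (card_le_card (t := (univ : Finset (F × F)).image (fun x => x.1 • p.rep + x.2 • p'.rep)) ?_).trans card_image_le
      intro x hx
      rw [mem_image] at hx
      obtain ⟨p'', hp, rfl⟩ := hx
      rw [hD, mem_filter] at hp
      obtain ⟨-, α, β, -, -, h⟩ := hp
      exact mem_image.2 ⟨(α, β), mem_univ _, h.symm⟩
    rw [card_image_of_injective] at h1
    · rw [card_univ, Fintype.card_prod] at h1
      rw [sq]
      exact_mod_cast h1
    · intro a b hab
      rw [← a.mk_rep, ← b.mk_rep]
      simp only at hab
      simp only [hab]
  have hpt : ∀ p'' ∈ (univ : Finset (Projectivization F (Fin k → F))), ∑ G : (Fin k → F) →ₗ[F] (Fin n → F), ind d p G * ind d p' G * ind d p'' G ≤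
      (if p'' = p then b^2 * N else 0) + (if p'' = p' then b^2 * N else 0) + b^3 * N + (if p'' ∈ D then η * b^2 * N else 0) := by
    intro p'' _
    have a1 : 0 ≤ b^2 * N := by positivity
    have a2 : 0 ≤ b^3 * N := by positivity
    have a3 : 0 ≤ η * b^2 * N := by positivity
    have i1 : 0 ≤ (if p'' = p then b^2 * N else 0) := by split_ifs <;> simp [a1]
    have i2 : 0 ≤ (if p'' = p' then b^2 * N else 0) := by split_ifs <;> simp [a1]
    have i3 : 0 ≤ (if p'' ∈ D then η * b^2 * N else 0) := by split_ifs <;> simp [a3]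
    by_cases h1 : p'' = p
    · have : ∑ G : (Fin k → F) →ₗ[F] (Fin n → F), ind d p G * ind d p' G * ind d p'' G = b^2 * N := by
        rw [h1, ← E2 p p' h]
        apply sum_congr rfl
        intro G _
        linear_combination ind d p' G * ind_sq (d := d) p G
      rw [this, if_pos h1]
      linarith
    by_cases h2 : p'' = p'
    · have : ∑ G : (Fin k → F) →ₗ[F] (Fin n → F), ind d p G * ind d p' G * ind d p'' G = b^2 * N := by
        rw [h2, ← E2 p p' h]
        apply sum_congr rfl
        intro G _
        linear_combination ind d p G * ind_sq (d := d) p' G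
      rw [this, if_pos h2]
      linarith
    rcases dep_or p p' p'' h h1 h2 with h3 | h3
    · rw [E3 p p' p'' h3]
      linarith
    · have : p'' ∈ D := by rw [hD, mem_filter]; exact ⟨mem_univ _, h3⟩
      obtain ⟨α, β, hα, hβ, hp⟩ := h3
      have := E3dep (n := n) (d := d) p p' p'' h α β hα hβ hp η hη
      rw [if_pos ‹p'' ∈ D›]
      linarith
  refine (sum_le_sum hpt).trans ?_
  simp only [sum_add_distrib, sum_ite_eq', mem_univ, if_true, sum_const, nsmul_eq_mul, card_univ, sum_ite_mem, univ_inter]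
  have : (D.card : ℝ) * (η * b^2 * N) ≤ (Fintype.card F : ℝ) ^ 2 * (η * b^2 * N) := by gcongr
  linarith

/-- the count -/
noncomputable def XX (d : ℕ) (G : (Fin k → F) →ₗ[F] (Fin n → F)) : ℝ := ∑ p, ind d p G

lemma XX_nat (G : (Fin k → F) →ₗ[F] (Fin n → F)) :
    XX d G = ((univ.filter (fun p : Projectivization F (Fin k → F) => G p.rep ∈ bll F n d)).card : ℕ) := by
  unfold XX ind
  rw [card_filter]; push_cast; rfl

lemma poly_neg (l b y : ℝ) (hl0 : 0 ≤ l) (hb : b ≤ 1 / 20) (hl : l < 17 / 10)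
    (hsq : 0 ≤ l ^ 2 - l * b) (hy : y ≤ 1 / 20) :
    12 * l - 12 + (l^2 - l*b) * (l - 5 + y) < 0 := by
  have g1 : (l^2 - l*b) * (l - 5 + y) ≤ (l^2 - l*b) * (l - 5 + 1/20) := by gcongr
  have g2 : l * b * (5 - 1/20 - l) ≤ l * (1/20) * (5 - 1/20 - l) := by
    apply mul_le_mul_of_nonneg_right _ (by linarith)
    gcongr
  have g3 : 12 * l - 12 + l^2 * (l - 5 + 1/20) + l * (1/20) * (5 - 1/20 - l) < 0 := by
    have hx : 0 < 17/10 - l := by linarith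
    nlinarith [mul_pos hx hx, mul_nonneg hl0 hx.le, mul_nonneg hl0 (mul_pos hx hx).le, mul_nonneg (mul_nonneg hl0 hl0) hx.le]
  linarith [g1, g2, g3]

lemma exists_good (η : ℝ) (hη0 : 0 ≤ η) (hη : (trip F n d : ℝ) ≤ η * ((bll F n d).card : ℝ) ^ 2)
    (hηq : (Fintype.card F : ℝ) ^ 2 * η ≤ 1 / 20) (hb : bt F n d ≤ 1 / 20)
    (hl : Fintype.card (Projectivization F (Fin k → F)) * bt F n d < 1.7) :
    ∃ G : (Fin k → F) →ₗ[F] (Fin n → F), ∀ p : Projectivization F (Fin k → F), G p.rep ∉ bll F n d := by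
  by_contra hcon
  push Not at hcon
  have hpos : ∀ G : (Fin k → F) →ₗ[F] (Fin n → F), 0 ≤ XX d G ^ 3 - 8 * XX d G ^ 2 + 19 * XX d G - 12 := by
    intro G
    rw [XX_nat]
    obtain ⟨p, hp⟩ := hcon G
    have h1 : 1 ≤ (univ.filter (fun p : Projectivization F (Fin k → F) => G p.rep ∈ bll F n d)).card :=
      card_pos.2 ⟨p, by simp [hp]⟩
    generalize (univ.filter (fun p : Projectivization F (Fin k → F) => G p.rep ∈ bll F n d)).card = x at h1
    have e : (x:ℝ)^3 - 8 * x^2 + 19 * x - 12 = (x - 1) * ((x - 3) * (x - 4)) := by ring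
    rw [e]
    have h1' : (1:ℝ) ≤ x := by exact_mod_cast h1
    apply mul_nonneg (by linarith)
    rcases Nat.lt_or_ge x 4 with h | h
    · have : (x:ℝ) ≤ 3 := by exact_mod_cast (by omega : x ≤ 3)
      nlinarith
    · have : (4:ℝ) ≤ x := by exact_mod_cast h
      nlinarith
  have hsum := Finset.sum_nonneg (fun G (_ : G ∈ univ) => hpos G)
  simp only [sum_sub_distrib, sum_add_distrib, ← mul_sum] at hsum
  set P : ℝ := ((Fintype.card (Projectivization F (Fin k → F)) : ℕ) : ℝ) with hP
  set b := bt F n d with hbdef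
  have hb0 : 0 ≤ b := by rw [hbdef]; unfold bt; positivity
  have hN0 : 0 < NL F n k := by
    unfold NL
    have : Nonempty ((Fin k → F) →ₗ[F] (Fin n → F)) := ⟨0⟩
    exact_mod_cast (Fintype.card_pos : 0 < Fintype.card ((Fin k → F) →ₗ[F] (Fin n → F)))
  have e1 : ∑ G : (Fin k → F) →ₗ[F] (Fin n → F), XX d G = P * b * NL F n k := by
    unfold XX
    rw [sum_comm, sum_congr rfl (fun p _ => E1 p), sum_const, nsmul_eq_mul, card_univ]
    ring
  have hX2 : ∀ G : (Fin k → F) →ₗ[F] (Fin n → F), XX d G ^ 2 = XX d G + ∑ p, ∑ p' ∈ univ.erase p, ind d p G * ind d p' G := by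
    intro G
    rw [sq]
    conv_lhs => unfold XX
    rw [sum_mul_sum]
    conv_rhs => unfold XX
    rw [← sum_add_distrib]
    apply sum_congr rfl
    intro p _
    rw [← add_sum_erase _ _ (mem_univ p), ind_sq]
  have hX3 : ∀ G : (Fin k → F) →ₗ[F] (Fin n → F), XX d G ^ 3 = XX d G ^ 2 +
      ∑ p, ∑ p' ∈ univ.erase p, ∑ p'', ind d p G * ind d p' G * ind d p'' G := by
    intro G
    have : ∀ p p', ∑ p'', ind d p G * ind d p' G * ind d p'' G = ind d p G * ind d p' G * XX d G := by
      intro p p'; rw [← mul_sum]; rfl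
    simp only [this, ← sum_mul]
    linear_combination XX d G * hX2 G
  have hcard : ∀ p : Projectivization F (Fin k → F), ((univ.erase p).card : ℝ) = P - 1 := by
    intro p
    have : 1 ≤ Fintype.card (Projectivization F (Fin k → F)) := Fintype.card_pos_iff.2 ⟨p⟩
    rw [card_erase_of_mem (mem_univ p), card_univ, Nat.cast_sub this, hP]; simp
  have e2 : ∑ G : (Fin k → F) →ₗ[F] (Fin n → F), XX d G ^ 2 = P * b * NL F n k + P * ((P - 1) * (b ^ 2 * NL F n k)) := by
    simp only [hX2, sum_add_distrib, e1]
    congr 1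
    rw [sum_comm, sum_congr rfl (g := fun _ => (P - 1) * (b ^ 2 * NL F n k)), sum_const, nsmul_eq_mul, card_univ]
    intro p _
    rw [sum_comm, sum_congr rfl (g := fun _ => (b ^ 2 * NL F n k)), sum_const, nsmul_eq_mul, hcard]
    intro p' hp'
    exact E2 p p' (by simpa using (ne_of_mem_erase hp').symm)
  set R := (2 * b ^ 2 + P * b ^ 3 + (Fintype.card F : ℝ) ^ 2 * (η * b ^ 2)) * NL F n k with hR
  have e3 : ∑ G : (Fin k → F) →ₗ[F] (Fin n → F), XX d G ^ 3 ≤ ∑ G : (Fin k → F) →ₗ[F] (Fin n → F), XX d G ^ 2 + P * ((P - 1) * R) := by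
    simp only [hX3, sum_add_distrib]
    gcongr
    rw [sum_comm]
    calc _ ≤ ∑ p : Projectivization F (Fin k → F), (P - 1) * R := ?_
      _ = _ := by rw [sum_const, nsmul_eq_mul, card_univ]
    apply sum_le_sum
    intro p _
    rw [sum_comm]
    calc _ ≤ ∑ p' ∈ univ.erase p, R := ?_
      _ = _ := by rw [sum_const, nsmul_eq_mul, hcard]
    apply sum_le_sum
    intro p' hp'
    rw [sum_comm]
    exact E3sum p p' (by simpa using (ne_of_mem_erase hp').symm) η hη0 hη
  have e0 : ∑ G : (Fin k → F) →ₗ[F] (Fin n → F), (12:ℝ) = 12 * NL F n k := by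
    rw [sum_const, nsmul_eq_mul, card_univ, mul_comm]; rfl
  rw [e0, e1] at hsum
  rw [e2] at hsum e3
  set N := NL F n k
  set y := (Fintype.card F : ℝ) ^ 2 * η
  have hy0 : 0 ≤ y := by positivity
  have hP0 : 0 ≤ P := by rw [hP]; positivity
  set l := P * b with hldef
  have hl0 : 0 ≤ l := by positivity
  have hRR : P * ((P - 1) * R) = (l^2 - l * b) * (2 + l + y) * N := by
    rw [hR, hldef]; ring
  have hPP : P * ((P - 1) * (b ^ 2 * N)) = (l^2 - l * b) * N := by rw [hldef]; ring
  have hsq : 0 ≤ (l^2 - l*b) := by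
    have : l^2 - l*b = P * (P-1) * b^2 := by rw [hldef]; ring
    rw [this]
    have : 0 ≤ P * (P - 1) := by
      rcases Nat.eq_zero_or_pos (Fintype.card (Projectivization F (Fin k → F))) with h | h
      · rw [hP, h]; simp
      · have : (1:ℝ) ≤ P := by rw [hP]; exact_mod_cast h
        nlinarith
    positivity
  rw [hRR, hPP] at e3
  rw [hPP] at hsum
  have hfin : 0 ≤ (12 * l - 12 + (l^2 - l*b) * (l - 5 + y)) * N := by linarith
  have hneg := poly_neg l b y hl0 hb (by norm_num at hl; exact hl) hsq hηq
  exact absurd hfin (not_le.2 (mul_neg_of_neg_of_pos hneg hN0))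

end main
end GVImp

/-- For a prime power `q` (realized as the cardinality of a finite field `F`)
and a constant `δ ∈ (0, 1 - 1/q)`, for all sufficiently large `n`, with `d = ⌊δn⌋`: if `k > 0`
satisfies `(q^k - 1)/(q - 1) < 1.7 · q^n / ∑_{i=0}^{d-1} C(n,i)(q-1)^i`, then there is a
`k`-dimensional linear subspace of `F^n` all of whose nonzero elements have Hamming weight at
least `d`. -/
theorem gv_bound_constant_improvement
    (q : ℕ) (F : Type) [Field F] [Fintype F] [DecidableEq F] (hF : Fintype.card F = q)
    (δ : ℝ) (hδ0 : 0 < δ) (hδ1 : δ < 1 - 1 / (q : ℝ)) :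
    ∃ N : ℕ, ∀ n : ℕ, N ≤ n → ∀ k : ℕ, 0 < k →
      ((q : ℝ) ^ k - 1) / ((q : ℝ) - 1) <
        1.7 * (q : ℝ) ^ n /
          (∑ i ∈ Finset.range ⌊δ * (n : ℝ)⌋₊, (n.choose i : ℝ) * ((q : ℝ) - 1) ^ i) →
      ∃ C : Submodule F (Fin n → F), Module.finrank F C = k ∧
        ∀ x ∈ C, x ≠ 0 → ⌊δ * (n : ℝ)⌋₊ ≤ hammingNorm x := by
  subst hF
  have hq := GVImp.card_gt_one (F := F)
  have hq0 : (0:ℝ) < Fintype.card F := by linarith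
  have hη1 : 1 / (20 * (Fintype.card F : ℝ) ^ 2) ≤ 1 / 20 := by
    apply one_div_le_one_div_of_le (by norm_num)
    nlinarith
  obtain ⟨N, hN⟩ := GVImp.asymp (F := F) δ hδ0 hδ1 (1 / (20 * (Fintype.card F : ℝ) ^ 2)) (by positivity)
  refine ⟨N, fun n hn k hk hlt => ?_⟩
  obtain ⟨hd1, hball, htrip⟩ := hN n hn
  rw [← GVImp.card_bll_real] at hlt
  set d := ⌊δ * (n : ℝ)⌋₊
  have hz : (0 : Fin n → F) ∈ GVImp.bll F n d := by
    rw [GVImp.mem_bll, hammingNorm_zero]; omega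
  have hV : (0:ℝ) < (GVImp.bll F n d).card := by exact_mod_cast card_pos.2 ⟨_, hz⟩
  have hP : ((Fintype.card (Projectivization F (Fin k → F)) : ℕ) : ℝ) =
      ((Fintype.card F : ℝ) ^ k - 1) / ((Fintype.card F : ℝ) - 1) := by
    have h1 := Projectivization.card' F (Fin k → F)
    rw [Nat.card_eq_fintype_card, Nat.card_eq_fintype_card, Nat.card_eq_fintype_card,
      Fintype.card_fun, Fintype.card_fin] at h1
    have h2 : ((Fintype.card F : ℝ)) ^ k = ((Fintype.card (Projectivization F (Fin k → F)) : ℕ) : ℝ) * ((Fintype.card F : ℝ) - 1) + 1 := by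
      have h3 : 1 ≤ Fintype.card F := Fintype.card_pos
      rw [← Nat.cast_one, ← Nat.cast_sub h3]
      exact_mod_cast h1
    rw [eq_div_iff (by linarith)]
    linarith
  obtain ⟨G, hG⟩ := GVImp.exists_good (F := F) (n := n) (k := k) (d := d)
    (1 / (20 * (Fintype.card F : ℝ) ^ 2)) (by positivity) htrip
    (by apply le_of_eq; field_simp)
    (by
      unfold GVImp.bt
      rw [div_le_iff₀ (by positivity)]
      exact hball.trans (by gcongr))
    (by
      rw [hP]
      unfold GVImp.bt
      rw [lt_div_iff₀ hV] at hlt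
      rw [← mul_div_assoc, div_lt_iff₀ (by positivity)]
      exact hlt)
  have hG' : ∀ a : Fin k → F, a ≠ 0 → d ≤ hammingNorm (G a) := by
    intro a ha
    obtain ⟨c, hc⟩ := Projectivization.exists_smul_eq_mk_rep F a ha
    have h1 := hG (Projectivization.mk F a ha)
    rw [← hc, GVImp.mem_bll, not_lt] at h1
    have h2 : G (c • a) = (c : F) • G a := by rw [Units.smul_def, map_smul]
    rwa [h2, GVImp.norm_smul_eq _ c.ne_zero] at h1
  have hinj : Function.Injective G := by
    rw [← LinearMap.ker_eq_bot, LinearMap.ker_eq_bot']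
    intro a ha
    by_contra hne
    have := hG' a hne
    rw [ha, hammingNorm_zero] at this
    omega
  refine ⟨LinearMap.range G, ?_, ?_⟩
  · rw [LinearMap.finrank_range_of_inj hinj]; simp
  · rintro x ⟨a, rfl⟩ hx
    exact hG' a (by rintro rfl; simp at hx)
end

section
/- Let q be a prime power and let δ ∈ (0, 1 − 1/q) be a constant. Then there exists a constant c_δ > 0, depending only on q and δ, such that for all sufficiently large n the following holds with d = ⌊δn⌋: if k is a positive integer satisfying (q^k − 1)/(q − 1) < c_δ · √n · q^n / ∑_{i=0}^{d−1} C(n,i)(q−1)^i, then there exists a k-dimensional linear subspace C ⊆ 𝔽_q^n all of whose nonzero elements have Hamming weight at least d (i.e., an [n,k] linear code over 𝔽_q with minimum Hamming distance at least d). -/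
open Finset
open scoped Classical

lemma ball_card (q n d : ℕ) (F : Type) [Field F] [Fintype F] [DecidableEq F] (hF : Fintype.card F = q) :
    ((univ.filter (fun x : Fin n → F => hammingNorm x < d)).card : ℝ) =
      ∑ i ∈ Finset.range d, (n.choose i : ℝ) * ((q : ℝ) - 1) ^ i := by
  have hq : 1 ≤ q := by rw [← hF]; exact Fintype.card_pos
  have h1 : (univ.filter (fun x : Fin n → F => hammingNorm x < d)).card =
      ∑ i ∈ Finset.range d, (univ.filter (fun x : Fin n → F => hammingNorm x = i)).card := by
    rw [Finset.card_eq_sum_card_fiberwise (f := fun x => hammingNorm x) (t := Finset.range d)]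
    · apply Finset.sum_congr rfl
      intro i hi
      congr 1
      ext x
      simp only [mem_filter, mem_univ, true_and, mem_range] at *
      omega
    · intro x hx
      simpa using hx
  have h2 : ∀ i, (univ.filter (fun x : Fin n → F => hammingNorm x = i)).card = n.choose i * (q - 1) ^ i := by
    intro i
    rw [Finset.card_eq_sum_card_fiberwise (f := fun x : Fin n → F => univ.filter (fun j => x j ≠ 0))
      (t := Finset.powersetCard i univ)]
    · rw [Finset.sum_congr rfl (g := fun _ => (q-1)^i)]
      · simp
      · intro T hT
        rw [mem_powersetCard] at hT
        have : (univ.filter (fun x : Fin n → F => hammingNorm x = i)).filter (fun x => univ.filter (fun j => x j ≠ 0) = T)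
            = Fintype.piFinset (fun j => if j ∈ T then univ.erase (0:F) else {0}) := by
          ext x
          simp only [mem_filter, mem_univ, true_and, Fintype.mem_piFinset]
          constructor
          · rintro ⟨_, rfl⟩ j
            by_cases h : x j = 0 <;> simp [h]
          · intro h
            have h3 : univ.filter (fun j => x j ≠ 0) = T := by
              ext j
              have := h j
              by_cases hj : j ∈ T <;> simp_all
            refine ⟨?_, h3⟩
            rw [← hT.2, ← h3]
            rfl
        rw [this, Fintype.card_piFinset]
        simp only [apply_ite Finset.card, Finset.prod_ite]
        simp [hF, hT.2]
    · intro x hx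
      simp only [coe_filter, mem_univ, true_and, Set.mem_ofPred_eq] at hx
      simp only [mem_coe, mem_powersetCard]
      exact ⟨subset_univ _, hx⟩
  rw [h1]
  push_cast
  apply Finset.sum_congr rfl
  intro i _
  rw [h2]
  push_cast [hq]
  rfl

/-- tuple evaluation is equidistributed -/
lemma eval_card {F V W : Type} [Field F] [AddCommGroup V] [Module F V] [AddCommGroup W] [Module F W]
    [FiniteDimensional F V] [Fintype W] [Fintype (V →ₗ[F] W)]
    {t : ℕ} (p : Fin t → V) (hp : LinearIndependent F p) (A : Finset (Fin t → W)) :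
    (univ.filter (fun G : V →ₗ[F] W => (fun i => G (p i)) ∈ A)).card * (Fintype.card W) ^ t =
      A.card * Fintype.card (V →ₗ[F] W) := by
  let φ : (V →ₗ[F] W) →+ (Fin t → W) :=
    { toFun := fun G i => G (p i), map_zero' := by ext; simp, map_add' := by intros; ext; simp }
  have hsurj : Function.Surjective φ := by
    intro y
    let b := Module.Basis.span hp
    obtain ⟨g, hg⟩ := LinearMap.exists_extend (b.constr F y)
    refine ⟨g, ?_⟩
    funext i
    have := LinearMap.congr_fun hg (b i)
    simp only [LinearMap.comp_apply, Module.Basis.constr_basis, Submodule.subtype_apply] at this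
    rw [← this]
    show g (p i) = _
    congr 1
    exact (congrArg Subtype.val (Module.Basis.span_apply hp i)).symm
  have hfib : ∀ y, (univ.filter (fun G => φ G = y)).card = (univ.filter (fun G => φ G = 0)).card := by
    intro y
    exact AddMonoidHom.card_fiber_eq_of_mem_range φ (hsurj y) (hsurj 0)
  have key : ∀ B : Finset (Fin t → W), (univ.filter (fun G => φ G ∈ B)).card = B.card * (univ.filter (fun G => φ G = 0)).card := by
    intro B
    rw [Finset.card_eq_sum_card_fiberwise (f := φ) (t := B)]
    · rw [← smul_eq_mul, ← Finset.sum_const]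
      apply Finset.sum_congr rfl
      intro y hy
      rw [← hfib y]
      congr 1
      ext G
      simp only [mem_filter, mem_univ, true_and]
      constructor
      · exact fun h => h.2
      · exact fun h => ⟨h ▸ hy, h⟩
    · intro x hx
      simpa using hx
  have h1 := key A
  have h2 := key univ
  simp only [mem_univ, filter_true, card_univ, Fintype.card_fun, Fintype.card_fin] at h2
  show (univ.filter (fun G => φ G ∈ A)).card * _ = _
  rw [h1, h2]
  ring

lemma exists_sub {F V W : Type} [Field F] [AddCommGroup V] [Module F V] [AddCommGroup W] [Module F W]
    [FiniteDimensional F V] [Finite V] (G : V →ₗ[F] W) (B : Set V) (h0 : (0:V) ∉ B)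
    (hs : ∀ (c : F) (v : V), c ≠ 0 → v ∈ B → c • v ∈ B)
    (hk : ∀ v, v ≠ 0 → G v = 0 → v ∈ B) (k M : ℕ) (hV : Module.finrank F V = k + 1)
    (hM : B.ncard ≤ M)
    (hno : ∀ t, 2 ≤ t → t ≤ M → ∀ p : Fin t → V, LinearIndependent F p → (∀ i, p i ∈ B) → ∑ i, p i ∈ B → False) :
    ∃ C : Submodule F W, Module.finrank F C = k ∧ ∀ x ∈ C, x ≠ 0 → ∃ v, G v = x ∧ v ∉ B := by
  obtain ⟨S, hSB, hspan, hS⟩ := exists_linearIndependent F B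
  obtain ⟨f, hf⟩ : ∃ f : V →ₗ[F] F, ∀ s ∈ S, f s = 1 := by
    let b := Module.Basis.span hS
    obtain ⟨g, hg⟩ := LinearMap.exists_extend (b.constr F (fun _ => (1:F)))
    refine ⟨g, fun s hs => ?_⟩
    have := LinearMap.congr_fun hg (b ⟨s, hs⟩)
    simp only [LinearMap.comp_apply, Module.Basis.constr_basis, Submodule.subtype_apply] at this
    rw [← this]
    congr 1
    exact (congrArg Subtype.val (Module.Basis.span_apply hS ⟨s, hs⟩)).symm
  have hfB : ∀ p ∈ B, f p ≠ 0 := by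
    intro p hp
    have hp' : p ∈ Submodule.span F S := hspan ▸ Submodule.subset_span hp
    have hr : S = Set.range (Subtype.val : S → V) := by simp
    rw [hr, Finsupp.mem_span_range_iff_exists_finsupp] at hp'
    obtain ⟨c, hc⟩ := hp'
    rw [Finsupp.sum] at hc
    have hne : p ≠ 0 := fun h => h0 (h ▸ hp)
    by_cases h2 : 2 ≤ c.support.card
    · exfalso
      have hcard : c.support.card ≤ M := by
        refine le_trans ?_ hM
        rw [← Set.ncard_coe_finset, ← Set.ncard_image_of_injective _ Subtype.val_injective]
        apply Set.ncard_le_ncard _ (Set.toFinite _)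
        rintro _ ⟨s, _, rfl⟩
        exact hSB s.2
      let e := c.support.equivFin
      apply hno _ h2 hcard (fun i => c (e.symm i) • ((e.symm i : S) : V))
      · have h3 : LinearIndependent F (fun i => (((e.symm i : S)) : V)) :=
          hS.comp (fun i => (e.symm i : S)) (Subtype.val_injective.comp e.symm.injective)
        exact h3.units_smul (fun i => Units.mk0 (c (e.symm i)) (Finsupp.mem_support_iff.1 (e.symm i).2))
      · intro i
        exact hs _ _ (Finsupp.mem_support_iff.1 (e.symm i).2) (hSB (e.symm i : S).2)
      · rw [Equiv.sum_comp e.symm (fun i : c.support => c i • ((i : S) : V))]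
        rw [Finset.sum_coe_sort c.support (fun i => c i • (i : V)), hc]
        exact hp
    · have h1 : c.support.card = 0 ∨ c.support.card = 1 := by omega
      rcases h1 with h1 | h1
      · rw [Finset.card_eq_zero] at h1
        rw [h1] at hc
        exact absurd hc.symm (by simpa using hne)
      · obtain ⟨s, hs1⟩ := Finset.card_eq_one.1 h1
        rw [hs1, Finset.sum_singleton] at hc
        have : c s ≠ 0 := Finsupp.mem_support_iff.1 (by rw [hs1]; simp)
        rw [← hc, map_smul, hf s s.2]
        simpa using this
  have hinj : Function.Injective (G.comp (LinearMap.ker f).subtype) := by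
    rw [← LinearMap.ker_eq_bot, LinearMap.ker_eq_bot']
    intro m hm
    by_contra hne
    exact hfB m (hk m (by simpa using hne) hm) m.2
  have hker : k ≤ Module.finrank F (LinearMap.ker f) := by
    have h1 := LinearMap.finrank_range_add_finrank_ker f
    have h2 := Submodule.finrank_le (LinearMap.range f)
    rw [Module.finrank_self] at h2
    omega
  obtain ⟨U, hU⟩ : ∃ U : Submodule F (LinearMap.ker f), Module.finrank F U = k := by
    let b := Module.finBasis F (LinearMap.ker f)
    refine ⟨Submodule.span F (Set.range (b ∘ Fin.castLE hker)), ?_⟩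
    rw [finrank_span_eq_card (b.linearIndependent.comp _ (Fin.castLE_injective hker))]
    simp
  refine ⟨U.map (G.comp (LinearMap.ker f).subtype), ?_, ?_⟩
  · rw [← hU]
    exact (Submodule.equivMapOfInjective _ hinj U).finrank_eq.symm
  · rintro x ⟨u, hu, rfl⟩ hx
    exact ⟨u, rfl, fun h => hfB _ h u.2⟩

/-- number of pairs -/
lemma tuple_card {W : Type} [AddCommGroup W] [Fintype W] (B : Finset W) (D : ℕ)
    (hD : ∀ v : W, (univ.filter (fun y : W × W => y.1 ∈ B ∧ y.2 ∈ B ∧ y.1 + y.2 + v ∈ B)).card ≤ D) (s : ℕ) :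
    (univ.filter (fun y : Fin (s+2) → W => (∀ i, y i ∈ B) ∧ ∑ i, y i ∈ B)).card ≤ D * B.card ^ s := by
  have h := Finset.card_le_mul_card_image_of_maps_to
    (s := univ.filter (fun y : Fin (s+2) → W => (∀ i, y i ∈ B) ∧ ∑ i, y i ∈ B))
    (t := Fintype.piFinset (fun _ : Fin s => B)) (f := fun y i => y i.succ.succ) (by
      intro y hy
      simp only [mem_filter, mem_univ, true_and] at hy
      simp only [Fintype.mem_piFinset]
      exact fun i => hy.1 _) D (by
      intro b _
      refine le_trans ?_ (hD (∑ i, b i))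
      apply Finset.card_le_card_of_injOn (fun y => (y 0, y 1))
      · intro y hy
        simp only [coe_filter, mem_filter, mem_univ, true_and, Set.mem_ofPred_eq] at hy ⊢
        obtain ⟨⟨h1, h2⟩, rfl⟩ := hy
        refine ⟨h1 _, h1 _, ?_⟩
        rw [Fin.sum_univ_succ, Fin.sum_univ_succ, ← add_assoc] at h2
        exact h2
      · intro y hy y' hy' hh
        simp only [coe_filter, mem_filter, mem_univ, true_and, Set.mem_ofPred_eq] at hy hy'
        simp only [Prod.mk.injEq] at hh
        have h3 := hy.2.trans hy'.2.symm
        funext i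
        refine Fin.cases hh.1 (fun j => Fin.cases hh.2 (fun l => congrFun h3 l) j) i)
  simpa using h

lemma wt_pow {n : ℕ} {F : Type} [Field F] [Fintype F] [DecidableEq F] (z : ℝ) (x : Fin n → F) :
    z ^ hammingNorm x = ∏ i, (if x i = 0 then 1 else z) := by
  rw [Finset.prod_ite]
  simp [hammingNorm]

lemma pair_coord {F : Type} [Field F] [Fintype F] [DecidableEq F] (q : ℕ) (hF : Fintype.card F = q)
    (z s W : ℝ) (hz0 : 0 < z) (hz1 : z < 1) (hs0 : 0 < s) (hs1 : s < 1) (hW : W = 1 + ((q:ℝ) - 1) * z) (v : F) :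
    ∑ y : F × F, (if y.1 = 0 then 1 else z) * (if y.2 = 0 then 1 else z) * (if y.1 + y.2 + v = 0 then 1 else s)
      ≤ s * W ^ 2 + (1 - s) * (z * W + 1 - z) := by
  have e : ∀ (u : ℝ) (a : F), (if a = 0 then 1 else u) = u + (1 - u) * (if a = 0 then 1 else 0) := by
    intro u a; split_ifs <;> ring
  have hsum : ∑ a : F, (if a = 0 then 1 else z) = W := by
    simp_rw [e z, Finset.sum_add_distrib, ← Finset.mul_sum]
    simp [hF, hW]; ring
  have hin : ∀ a : F, ∑ b : F, (if a = 0 then 1 else z) * (if b = 0 then 1 else z) * (if a + b + v = 0 then 1 else s)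
      = (if a = 0 then 1 else z) * (s * W + (1 - s) * (if a = -v then 1 else z)) := by
    intro a
    simp_rw [mul_assoc, ← Finset.mul_sum]
    congr 1
    simp_rw [e s, mul_add, Finset.sum_add_distrib]
    rw [← Finset.sum_mul, hsum]
    have : ∀ b : F, (a + b + v = 0) ↔ b = -v - a := by
      intro b; constructor <;> intro h
      · linear_combination h
      · rw [h]; ring
    simp_rw [this]
    simp only [mul_ite, mul_one, mul_zero, Finset.sum_ite_eq', mem_univ, if_true]
    have : (-v - a = 0) ↔ a = -v := by
      constructor <;> intro h
      · linear_combination -h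
      · rw [h]; ring
    simp_rw [this]
    split_ifs <;> ring
  rw [Fintype.sum_prod_type]
  simp only [hin]
  simp_rw [mul_add, Finset.sum_add_distrib, ← Finset.sum_mul, hsum]
  have h2 : ∑ a : F, (if a = 0 then 1 else z) * ((1 - s) * (if a = -v then 1 else z)) ≤ (1 - s) * (z * W + 1 - z) := by
    have e2 : ∀ a : F, (if a = -v then (1:ℝ) else z) = z + (1 - z) * (if a = -v then 1 else 0) := by
      intro a; split_ifs <;> ring
    have : ∑ a : F, (if a = 0 then 1 else z) * ((1 - s) * (if a = -v then 1 else z)) =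
        (1 - s) * (z * W + (1 - z) * (if -v = 0 then 1 else z)) := by
      simp_rw [e2, mul_add, Finset.sum_add_distrib]
      rw [← Finset.sum_mul, hsum]
      simp only [mul_ite, mul_one, mul_zero, Finset.sum_ite_eq', mem_univ, if_true]
      split_ifs <;> ring
    rw [this]
    apply mul_le_mul_of_nonneg_left _ (by linarith)
    split_ifs <;> nlinarith
  nlinarith

lemma pair_card {n : ℕ} {F : Type} [Field F] [Fintype F] [DecidableEq F] (q : ℕ) (hF : Fintype.card F = q) (e : ℕ)
    (z s W : ℝ) (hz0 : 0 < z) (hz1 : z < 1) (hs0 : 0 < s) (hs1 : s < 1) (hW : W = 1 + ((q:ℝ) - 1) * z) (v : Fin n → F) :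
    ((univ.filter (fun y : (Fin n → F) × (Fin n → F) =>
        hammingNorm y.1 ≤ e ∧ hammingNorm y.2 ≤ e ∧ hammingNorm (y.1 + y.2 + v) ≤ e)).card : ℝ) * (z ^ e * z ^ e * s ^ e)
      ≤ (s * W ^ 2 + (1 - s) * (z * W + 1 - z)) ^ n := by
  calc _ = ∑ y ∈ (univ.filter (fun y : (Fin n → F) × (Fin n → F) =>
        hammingNorm y.1 ≤ e ∧ hammingNorm y.2 ≤ e ∧ hammingNorm (y.1 + y.2 + v) ≤ e)), (z ^ e * z ^ e * s ^ e) := by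
          rw [Finset.sum_const, nsmul_eq_mul]
    _ ≤ ∑ y ∈ (univ.filter (fun y : (Fin n → F) × (Fin n → F) =>
        hammingNorm y.1 ≤ e ∧ hammingNorm y.2 ≤ e ∧ hammingNorm (y.1 + y.2 + v) ≤ e)),
          z ^ hammingNorm y.1 * z ^ hammingNorm y.2 * s ^ hammingNorm (y.1 + y.2 + v) := by
        apply Finset.sum_le_sum
        intro y hy
        simp only [mem_filter, mem_univ, true_and] at hy
        have h1 := pow_le_pow_of_le_one hz0.le hz1.le hy.1
        have h2 := pow_le_pow_of_le_one hz0.le hz1.le hy.2.1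
        have h3 := pow_le_pow_of_le_one hs0.le hs1.le hy.2.2
        gcongr
    _ ≤ ∑ y : (Fin n → F) × (Fin n → F),
          z ^ hammingNorm y.1 * z ^ hammingNorm y.2 * s ^ hammingNorm (y.1 + y.2 + v) := by
        apply Finset.sum_le_sum_of_subset_of_nonneg (subset_univ _)
        intros; positivity
    _ = ∑ y : Fin n → F × F, ∏ i, ((if (y i).1 = 0 then 1 else z) * (if (y i).2 = 0 then 1 else z) *
          (if (y i).1 + (y i).2 + v i = 0 then 1 else s)) := by
        rw [← Equiv.sum_comp (Equiv.arrowProdEquivProdArrow (Fin n) (fun _ => F) (fun _ => F))]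
        apply Finset.sum_congr rfl
        intro y _
        simp only [wt_pow, ← Finset.prod_mul_distrib]
        rfl
    _ = ∏ i : Fin n, ∑ y : F × F, ((if y.1 = 0 then 1 else z) * (if y.2 = 0 then 1 else z) *
          (if y.1 + y.2 + v i = 0 then 1 else s)) := by
        rw [Finset.prod_univ_sum]
        simp
    _ ≤ ∏ i : Fin n, (s * W ^ 2 + (1 - s) * (z * W + 1 - z)) := by
        apply Finset.prod_le_prod
        · intros
          apply Finset.sum_nonneg
          intros
          apply mul_nonneg (mul_nonneg _ _) <;> split_ifs <;> linarith
        · intro i _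
          exact pair_coord q hF z s W hz0 hz1 hs0 hs1 hW (v i)
    _ = _ := by simp

lemma max_term (n d : ℕ) (δ x : ℝ) (h0 : 0 < δ) (h1 : δ < 1) (hx : x * (1 - δ) = δ) (hd : 1 ≤ d)
    (hd1 : (d:ℝ) ≤ δ * n) (hd2 : δ * n < d + 1) :
    (1 + x) ^ n ≤ (n + 1) * (1 + n * x) ^ 2 * (n.choose (d-1) * x ^ (d-1)) := by
  have hx0 : 0 < x := by
    by_contra h
    have : x * (1 - δ) ≤ 0 := mul_nonpos_of_nonpos_of_nonneg (by linarith) (by linarith)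
    linarith
  set a : ℕ → ℝ := fun i => n.choose i * x ^ i with ha
  have ha0 : ∀ i, 0 ≤ a i := fun i => by positivity
  have hrec : ∀ i, a (i+1) * (i+1) = a i * ((n:ℝ) - i) * x := by
    intro i
    have := Nat.choose_succ_right_eq n i
    by_cases hi : i ≤ n
    · have h : (n.choose (i+1) : ℝ) * (i+1) = n.choose i * ((n:ℝ) - i) := by
        have h3 : ((n.choose (i+1) * (i+1) : ℕ) : ℝ) = ((n.choose i * (n - i) : ℕ) : ℝ) := by rw [this]
        push_cast [hi] at h3
        exact h3
      simp only [ha]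
      rw [pow_succ]
      linear_combination x ^ i * x * h
    · simp [ha, Nat.choose_eq_zero_of_lt (show n < i by omega), Nat.choose_eq_zero_of_lt (show n < i + 1 by omega)]
  have hstep : ∀ i, a (i+1) ≤ a i * (n * x) := by
    intro i
    have := hrec i
    have h3 : a (i+1) * 1 ≤ a (i+1) * (i+1) := by
      apply mul_le_mul_of_nonneg_left _ (ha0 _)
      have : (0:ℝ) ≤ i := by positivity
      linarith
    have h4 : a i * ((n:ℝ) - i) * x ≤ a i * (n * x) := by
      rw [mul_assoc]
      apply mul_le_mul_of_nonneg_left _ (ha0 _)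
      apply mul_le_mul_of_nonneg_right _ hx0.le
      have : (0:ℝ) ≤ i := by positivity
      linarith
    linarith
  have hup : ∀ i, i + 1 ≤ d → a i ≤ a (i+1) := by
    intro i hi
    have hi' : (i:ℝ) + 1 ≤ d := by exact_mod_cast hi
    have h3 : ((i:ℝ)+1) ≤ ((n:ℝ) - i) * x := by
      have : ((i:ℝ)+1) * (1 - δ) ≤ ((n:ℝ) - i) * x * (1 - δ) := by
        rw [mul_assoc, hx]; nlinarith
      exact le_of_mul_le_mul_right this (by linarith)
    have h4 : a i * (i+1) ≤ a (i+1) * (i+1) := by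
      rw [hrec, mul_assoc (a i)]
      exact mul_le_mul_of_nonneg_left h3 (ha0 _)
    exact le_of_mul_le_mul_right h4 (by positivity)
  have hdn : ∀ i, d + 1 ≤ i → a (i+1) ≤ a i := by
    intro i hi
    have hi' : (d:ℝ) + 1 ≤ i := by exact_mod_cast hi
    have h3 : ((n:ℝ) - i) * x ≤ ((i:ℝ)+1) := by
      have : ((n:ℝ) - i) * x * (1 - δ) ≤ ((i:ℝ)+1) * (1 - δ) := by
        rw [mul_assoc, hx]; nlinarith
      exact le_of_mul_le_mul_right this (by linarith)
    have h4 : a (i+1) * (i+1) ≤ a i * (i+1) := by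
      rw [hrec, mul_assoc (a i)]
      exact mul_le_mul_of_nonneg_left h3 (ha0 _)
    exact le_of_mul_le_mul_right h4 (by positivity)
  have hup' : ∀ j, j ≤ d → a (d - j) ≤ a d := by
    intro j
    induction j with
    | zero => intro _; simp
    | succ j ih =>
      intro hj
      have := hup (d - (j+1)) (by omega)
      rw [show d - (j+1) + 1 = d - j by omega] at this
      exact this.trans (ih (by omega))
  have hdn' : ∀ j, a (d + 1 + j) ≤ a (d+1) := by
    intro j
    induction j with
    | zero => simp
    | succ j ih => exact (hdn (d+1+j) (by omega)).trans ih
  have hk : 0 ≤ n * x := by positivity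
  have hd' : a d ≤ a (d-1) * (n*x) := by
    have := hstep (d-1)
    rwa [show d - 1 + 1 = d by omega] at this
  have hall : ∀ i, a i ≤ (1 + n * x) ^ 2 * a (d-1) := by
    intro i
    have hA : a d ≤ (1 + n * x) ^ 2 * a (d-1) := by
      nlinarith [ha0 (d-1), mul_nonneg (ha0 (d-1)) hk, mul_nonneg (ha0 (d-1)) (mul_nonneg hk hk)]
    have hB : a (d+1) ≤ (1 + n * x) ^ 2 * a (d-1) := by
      have := hstep d
      have h5 := mul_le_mul_of_nonneg_right hd' hk
      nlinarith [ha0 (d-1), mul_nonneg (ha0 (d-1)) hk, mul_nonneg (ha0 (d-1)) (mul_nonneg hk hk)]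
    rcases le_or_gt i d with h | h
    · have := hup' (d - i) (by omega)
      rw [show d - (d - i) = i by omega] at this
      exact this.trans hA
    · have := hdn' (i - (d+1))
      rw [show d + 1 + (i - (d+1)) = i by omega] at this
      exact this.trans hB
  calc (1 + x) ^ n = ∑ i ∈ range (n+1), a i := by
        rw [add_comm, add_pow]
        apply Finset.sum_congr rfl
        intro i _
        simp [ha]; ring
    _ ≤ ∑ i ∈ range (n+1), (1 + n * x) ^ 2 * a (d-1) := Finset.sum_le_sum (fun i _ => hall i)
    _ = _ := by simp; ring

lemma exists_G {F V W : Type} [Field F] [AddCommGroup V] [Module F V] [AddCommGroup W] [Module F W]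
    [FiniteDimensional F V] [Fintype V] [Fintype W] (B : Finset W) (M : ℕ) (μ η : ℝ)
    (hη : 0 ≤ η) (hμ : (Fintype.card V : ℝ) * B.card ≤ μ * Fintype.card W)
    (hA : ∀ s : ℕ, ((univ.filter (fun y : Fin (s+2) → W => (∀ i, y i ∈ B) ∧ ∑ i, y i ∈ B)).card : ℝ)
      ≤ η * (B.card : ℝ) ^ (s+2))
    (hM : 2 * μ ≤ M) (hsum : ∑ t ∈ Finset.Icc 2 M, μ ^ t * η < 1 / 2) :
    ∃ G : V →ₗ[F] W, {v : V | v ≠ 0 ∧ G v ∈ B}.ncard ≤ M ∧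
      ∀ t, 2 ≤ t → t ≤ M → ∀ p : Fin t → V, LinearIndependent F p → (∀ i, G (p i) ∈ B) →
        G (∑ i, p i) ∈ B → False := by
  have : Finite (V →ₗ[F] W) := DFunLike.finite _
  let _ : Fintype (V →ₗ[F] W) := Fintype.ofFinite _
  have hW0 : (0:ℝ) < Fintype.card W := by exact_mod_cast Fintype.card_pos
  set N : ℝ := (Fintype.card (V →ₗ[F] W) : ℝ) with hN
  have hN0 : 0 < N := by rw [hN]; exact_mod_cast Fintype.card_pos
  by_contra hcon
  push Not at hcon
  let bad : (V →ₗ[F] W) → Finset V := fun G => univ.filter (fun v => v ≠ 0 ∧ G v ∈ B)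
  let E1 : Finset (V →ₗ[F] W) := univ.filter (fun G => M < (bad G).card)
  let E : ℕ → Finset (V →ₗ[F] W) := fun t => univ.filter (fun G =>
    ∃ p : Fin t → V, LinearIndependent F p ∧ (∀ i, G (p i) ∈ B) ∧ G (∑ i, p i) ∈ B)
  have hcover : (univ : Finset (V →ₗ[F] W)) ⊆ E1 ∪ (Finset.Icc 2 M).biUnion E := by
    intro G _
    rw [mem_union]
    by_cases h : M < (bad G).card
    · left; simpa [E1] using h
    · right
      have hb : {v : V | v ≠ 0 ∧ G v ∈ B}.ncard ≤ M := by
        have : {v : V | v ≠ 0 ∧ G v ∈ B} = (bad G : Set V) := by ext; simp [bad]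
        rw [this, Set.ncard_coe_finset]
        omega
      obtain ⟨t, h2, hM, p, hp, h3, h4⟩ := hcon G hb
      rw [mem_biUnion]
      refine ⟨t, by simp [h2, hM], ?_⟩
      simp only [E, mem_filter, mem_univ, true_and]
      exact ⟨p, hp, h3, h4.1⟩
  have hE1 : (E1.card : ℝ) * (M + 1) ≤ μ * N := by
    have h1 : ∑ G, ((bad G).card : ℝ) ≤ μ * N := by
      have hsw : ∑ G, (bad G).card = ∑ v ∈ univ.filter (fun v : V => v ≠ 0), (univ.filter (fun G : V →ₗ[F] W => G v ∈ B)).card := by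
        simp only [bad, Finset.card_filter, Finset.sum_filter]
        rw [Finset.sum_comm]
        apply Finset.sum_congr rfl
        intro v _
        by_cases h : v = 0 <;> simp [h]
      have hv : ∀ v : V, v ≠ 0 → ((univ.filter (fun G : V →ₗ[F] W => G v ∈ B)).card : ℝ) = B.card * N / Fintype.card W := by
        intro v hv
        have := eval_card (F := F) (W := W) (fun _ : Fin 1 => v) (by
          rw [linearIndependent_unique_iff]; exact hv) (Fintype.piFinset (fun _ => B))
        simp only [Fintype.mem_piFinset, forall_const, pow_one, Fintype.card_piFinset, prod_const, card_univ, Fintype.card_fin] at this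
        rw [eq_div_iff hW0.ne']
        rw [hN]
        exact_mod_cast this
      have : ∑ G, ((bad G).card : ℝ) = ∑ v ∈ univ.filter (fun v : V => v ≠ 0), (B.card * N / Fintype.card W : ℝ) := by
        rw [← Finset.sum_congr rfl (fun v hv' => hv v (by simpa using hv'))]
        exact_mod_cast hsw
      rw [this, Finset.sum_const, nsmul_eq_mul, mul_div_assoc', div_le_iff₀ hW0]
      calc _ ≤ (Fintype.card V : ℝ) * (B.card * N) := by
            apply mul_le_mul_of_nonneg_right _ (by positivity)
            exact_mod_cast Finset.card_le_univ _
        _ = (Fintype.card V : ℝ) * B.card * N := by ring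
        _ ≤ μ * Fintype.card W * N := mul_le_mul_of_nonneg_right hμ hN0.le
        _ = _ := by ring
    refine le_trans ?_ h1
    calc (E1.card : ℝ) * (M + 1) = ∑ G ∈ E1, ((M:ℝ) + 1) := by rw [Finset.sum_const, nsmul_eq_mul]
      _ ≤ ∑ G ∈ E1, ((bad G).card : ℝ) := by
          apply Finset.sum_le_sum
          intro G hG
          simp only [E1, mem_filter, mem_univ, true_and] at hG
          exact_mod_cast hG
      _ ≤ _ := Finset.sum_le_sum_of_subset_of_nonneg (subset_univ _) (by intros; positivity)
  have hE : ∀ t ∈ Finset.Icc 2 M, ((E t).card : ℝ) ≤ μ ^ t * η * N := by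
    intro t ht
    obtain ⟨s, rfl⟩ : ∃ s, t = s + 2 := ⟨t - 2, by simp at ht; omega⟩
    set A := univ.filter (fun y : Fin (s+2) → W => (∀ i, y i ∈ B) ∧ ∑ i, y i ∈ B) with hAdef
    have hsub : E (s+2) ⊆ (univ.filter (fun p : Fin (s+2) → V => LinearIndependent F p)).biUnion
        (fun p => univ.filter (fun G : V →ₗ[F] W => (fun i => G (p i)) ∈ A)) := by
      intro G hG
      simp only [E, mem_filter, mem_univ, true_and] at hG
      obtain ⟨p, hp, h1, h2⟩ := hG
      rw [mem_biUnion]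
      refine ⟨p, by simpa using hp, ?_⟩
      simp only [hAdef, mem_filter, mem_univ, true_and]
      exact ⟨h1, by simpa using h2⟩
    have h1 : ((E (s+2)).card : ℝ) ≤ ∑ p ∈ univ.filter (fun p : Fin (s+2) → V => LinearIndependent F p),
        ((univ.filter (fun G : V →ₗ[F] W => (fun i => G (p i)) ∈ A)).card : ℝ) := by
      exact_mod_cast (Finset.card_le_card hsub).trans Finset.card_biUnion_le
    have h2 : ∀ p ∈ univ.filter (fun p : Fin (s+2) → V => LinearIndependent F p),
        ((univ.filter (fun G : V →ₗ[F] W => (fun i => G (p i)) ∈ A)).card : ℝ) ≤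
          η * (B.card : ℝ) ^ (s+2) * N / (Fintype.card W : ℝ) ^ (s+2) := by
      intro p hp
      have := eval_card (F := F) (W := W) p (by simpa using hp) A
      rw [le_div_iff₀ (by positivity)]
      have h3 : ((univ.filter (fun G : V →ₗ[F] W => (fun i => G (p i)) ∈ A)).card : ℝ) * (Fintype.card W : ℝ) ^ (s+2) = A.card * N := by
        rw [hN]; exact_mod_cast this
      rw [h3]
      exact mul_le_mul_of_nonneg_right (hA s) hN0.le
    refine h1.trans ((Finset.sum_le_sum h2).trans ?_)
    rw [Finset.sum_const, nsmul_eq_mul, mul_div_assoc', div_le_iff₀ (by positivity)]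
    calc _ ≤ (Fintype.card V : ℝ) ^ (s+2) * (η * (B.card : ℝ) ^ (s+2) * N) := by
          apply mul_le_mul_of_nonneg_right _ (by positivity)
          have := Finset.card_le_univ (univ.filter (fun p : Fin (s+2) → V => LinearIndependent F p))
          rw [Fintype.card_fun, Fintype.card_fin] at this
          exact_mod_cast this
      _ = ((Fintype.card V : ℝ) * B.card) ^ (s+2) * (η * N) := by rw [mul_pow]; ring
      _ ≤ (μ * Fintype.card W) ^ (s+2) * (η * N) := by gcongr
      _ = _ := by rw [mul_pow]; ring
  have hE1' : (E1.card : ℝ) ≤ N / 2 := by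
    have : (0:ℝ) ≤ M := by positivity
    have h5 : (0:ℝ) ≤ E1.card := by positivity
    by_contra h
    push Not at h
    have : N / 2 * (M + 1) < E1.card * ((M:ℝ) + 1) := by gcongr
    nlinarith
  have htot : N ≤ E1.card + ∑ t ∈ Finset.Icc 2 M, ((E t).card : ℝ) := by
    have h := Finset.card_le_card hcover
    have h2 := Finset.card_union_le E1 ((Finset.Icc 2 M).biUnion E)
    have h3 := Finset.card_biUnion_le (s := Finset.Icc 2 M) (t := E)
    rw [Finset.card_univ] at h
    rw [hN]
    exact_mod_cast h.trans (h2.trans (by omega))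
  have h6 : ∑ t ∈ Finset.Icc 2 M, ((E t).card : ℝ) < N / 2 := by
    calc _ ≤ ∑ t ∈ Finset.Icc 2 M, μ ^ t * η * N := Finset.sum_le_sum hE
      _ = (∑ t ∈ Finset.Icc 2 M, μ ^ t * η) * N := by rw [Finset.sum_mul]
      _ < 1 / 2 * N := by gcongr
      _ = N / 2 := by ring
  linarith

lemma exists_G_of_pair {F V W : Type} [Field F] [AddCommGroup V] [Module F V] [AddCommGroup W] [Module F W]
    [FiniteDimensional F V] [Fintype V] [Fintype W] (B : Finset W) (M : ℕ) (μ η : ℝ)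
    (hη : 0 ≤ η) (hμ : (Fintype.card V : ℝ) * B.card ≤ μ * Fintype.card W)
    (hpair : ∀ v : W, ((univ.filter (fun y : W × W => y.1 ∈ B ∧ y.2 ∈ B ∧ y.1 + y.2 + v ∈ B)).card : ℝ) ≤
      η * (B.card : ℝ) ^ 2)
    (hM : 2 * μ ≤ M) (hsum : ∑ t ∈ Finset.Icc 2 M, μ ^ t * η < 1 / 2) :
    ∃ G : V →ₗ[F] W, {v : V | v ≠ 0 ∧ G v ∈ B}.ncard ≤ M ∧
      ∀ t, 2 ≤ t → t ≤ M → ∀ p : Fin t → V, LinearIndependent F p → (∀ i, G (p i) ∈ B) →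
        G (∑ i, p i) ∈ B → False := by
  refine exists_G B M μ η hη hμ ?_ hM hsum
  intro s
  have h1 := tuple_card B ⌊η * (B.card : ℝ) ^ 2⌋₊ (fun v => Nat.le_floor (hpair v)) s
  have h2 : ((univ.filter (fun y : Fin (s+2) → W => (∀ i, y i ∈ B) ∧ ∑ i, y i ∈ B)).card : ℝ) ≤
      (⌊η * (B.card : ℝ) ^ 2⌋₊ : ℝ) * (B.card : ℝ) ^ s := by exact_mod_cast h1
  refine h2.trans ?_
  have h3 := Nat.floor_le (show 0 ≤ η * (B.card : ℝ) ^ 2 by positivity)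
  calc _ ≤ η * (B.card : ℝ) ^ 2 * (B.card : ℝ) ^ s := by gcongr
    _ = _ := by ring

lemma pair_bound_s2 (q : ℕ) (F : Type) [Field F] [Fintype F] [DecidableEq F] (hF : Fintype.card F = q)
    (δ : ℝ) (hδ0 : 0 < δ) (hδ1 : δ < 1 - 1 / (q : ℝ)) :
    ∃ ρ x : ℝ, 0 < ρ ∧ ρ < 1 ∧ 0 < x ∧ ∀ n d : ℕ, d = ⌊δ * (n:ℝ)⌋₊ → 1 ≤ d → ∀ v : Fin n → F,
      ((univ.filter (fun y : (Fin n → F) × (Fin n → F) =>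
        hammingNorm y.1 < d ∧ hammingNorm y.2 < d ∧ hammingNorm (y.1 + y.2 + v) < d)).card : ℝ) ≤
      ((n + 1) * (1 + n * x) ^ 2) ^ 2 * ρ ^ n *
        (∑ i ∈ Finset.range d, (n.choose i : ℝ) * ((q : ℝ) - 1) ^ i) ^ 2 := by
  have hq2 : 2 ≤ q := by rw [← hF]; exact Fintype.one_lt_card
  have hq : (2:ℝ) ≤ q := by exact_mod_cast hq2
  have hδ2 : δ * q < q - 1 := by
    have : (1 - 1 / (q:ℝ)) * q = q - 1 := by field_simp
    rw [← this]; gcongr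
  have hδ3 : δ < 1 := by nlinarith
  obtain ⟨z, hz⟩ : ∃ z : ℝ, z * ((1 - δ) * (q - 1)) = δ := by
    refine ⟨δ / ((1 - δ) * (q - 1)), div_mul_cancel₀ _ ?_⟩
    exact (mul_pos (by linarith) (by linarith)).ne'
  have hpos : 0 < (1 - δ) * ((q:ℝ) - 1) := mul_pos (by linarith) (by linarith)
  have hz0 : 0 < z := by
    by_contra h
    nlinarith
  have hz1 : z < 1 := by
    by_contra h
    nlinarith
  obtain ⟨W, hW⟩ : ∃ W : ℝ, W = 1 + ((q:ℝ) - 1) * z := ⟨_, rfl⟩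
  have hW1 : W * (1 - δ) = 1 := by rw [hW]; linear_combination hz
  have hWgt : 1 < W := by rw [hW]; nlinarith
  have hW0 : 0 < W := by linarith
  obtain ⟨P, hP⟩ : ∃ P : ℝ, P * W ^ 2 = z * W + 1 - z := ⟨(z * W + 1 - z) / W ^ 2, div_mul_cancel₀ _ (by positivity)⟩
  have hP0 : 0 < P := by
    by_contra h
    have : P * W^2 ≤ 0 := mul_nonpos_of_nonpos_of_nonneg (by linarith) (by positivity)
    nlinarith
  have hP1 : P < 1 - δ := by
    have h1 : P * W ^ 2 < (1 - δ) * W ^ 2 := by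
      rw [hP]
      have : (1 - δ) * W ^ 2 = W := by linear_combination W * hW1
      rw [this]
      nlinarith
    exact lt_of_mul_lt_mul_right h1 (by positivity)
  obtain ⟨s, hs, hs1⟩ : ∃ s : ℝ, δ / (1 - P) < s ∧ s < 1 := by
    apply _root_.exists_between
    rw [div_lt_one (by linarith)]; linarith
  have hs0 : 0 < s := lt_trans (div_pos hδ0 (by linarith)) hs
  rw [div_lt_iff₀ (by linarith)] at hs
  have hκ : s + (1 - s) * P < s ^ δ := by
    have h1 : 1 + δ * (1 - s⁻¹) ≤ s ^ δ := by
      rw [Real.rpow_def_of_pos hs0]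
      have h2 := Real.one_sub_inv_le_log_of_pos hs0
      have h3 := Real.add_one_le_exp (Real.log s * δ)
      nlinarith
    refine lt_of_lt_of_le ?_ h1
    have h4 : s⁻¹ * s = 1 := inv_mul_cancel₀ hs0.ne'
    have h5 : (s + (1 - s) * P) * s < (1 + δ * (1 - s⁻¹)) * s := by
      have : (1 + δ * (1 - s⁻¹)) * s = s + δ * s - δ := by linear_combination (-δ) * h4
      rw [this]
      nlinarith
    exact lt_of_mul_lt_mul_right h5 hs0.le
  have hκ0 : 0 < s + (1 - s) * P := by nlinarith
  have hsδ : 0 < s ^ δ := Real.rpow_pos_of_pos hs0 _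
  refine ⟨(s + (1 - s) * P) / s ^ δ, ((q:ℝ) - 1) * z, div_pos hκ0 hsδ, (div_lt_one hsδ).2 hκ, by nlinarith, ?_⟩
  set ρ := (s + (1 - s) * P) / s ^ δ with hρ
  have hρ0 : 0 < ρ := div_pos hκ0 hsδ
  intro n d hd hd1 v
  set Vol := ∑ i ∈ Finset.range d, (n.choose i : ℝ) * ((q : ℝ) - 1) ^ i with hVol
  set Q : ℝ := (n + 1) * (1 + n * (((q:ℝ) - 1) * z)) ^ 2 with hQ
  have hQ0 : 0 ≤ Q := by positivity
  have hnn : 0 ≤ δ * n := by positivity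
  have hfl : (d:ℝ) ≤ δ * n := by rw [hd]; exact Nat.floor_le hnn
  have hfl2 : δ * n < d + 1 := by rw [hd]; exact Nat.lt_floor_add_one _
  have hmax := max_term n d δ (((q:ℝ) - 1) * z) hδ0 hδ3 (by linear_combination hz) hd1 hfl hfl2
  rw [← hW] at hmax
  have hterm : (n.choose (d-1) : ℝ) * ((q:ℝ) - 1) ^ (d-1) ≤ Vol := by
    rw [hVol]
    apply Finset.single_le_sum (f := fun i => (n.choose i : ℝ) * ((q:ℝ) - 1) ^ i)
    · intro i _
      have : 0 ≤ (q:ℝ) - 1 := by linarith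
      positivity
    · simp; omega
  have hWn : W ^ n ≤ Q * (Vol * z ^ (d-1)) := by
    refine hmax.trans ?_
    apply mul_le_mul_of_nonneg_left _ hQ0
    rw [mul_pow, ← mul_assoc]
    exact mul_le_mul_of_nonneg_right hterm (by positivity)
  have hpc := pair_card q hF (d-1) z s W hz0 hz1 hs0 hs1 hW v
  have hset : (univ.filter (fun y : (Fin n → F) × (Fin n → F) =>
        hammingNorm y.1 < d ∧ hammingNorm y.2 < d ∧ hammingNorm (y.1 + y.2 + v) < d)) =
      (univ.filter (fun y : (Fin n → F) × (Fin n → F) =>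
        hammingNorm y.1 ≤ d-1 ∧ hammingNorm y.2 ≤ d-1 ∧ hammingNorm (y.1 + y.2 + v) ≤ d-1)) := by
    ext y
    simp only [mem_filter, mem_univ, true_and]
    omega
  rw [hset]
  set D : ℝ := ((univ.filter (fun y : (Fin n → F) × (Fin n → F) =>
        hammingNorm y.1 ≤ d-1 ∧ hammingNorm y.2 ≤ d-1 ∧ hammingNorm (y.1 + y.2 + v) ≤ d-1)).card : ℝ) with hD
  have hκn : (s + (1 - s) * P) ^ n ≤ ρ ^ n * s ^ (d-1) := by
    have : s + (1 - s) * P = ρ * s ^ δ := by rw [hρ]; field_simp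
    rw [this, mul_pow]
    apply mul_le_mul_of_nonneg_left _ (by positivity)
    rw [← Real.rpow_natCast, ← Real.rpow_mul hs0.le, ← Real.rpow_natCast]
    apply Real.rpow_le_rpow_of_exponent_ge hs0 hs1.le
    have : ((d-1 : ℕ):ℝ) ≤ d := by exact_mod_cast Nat.sub_le d 1
    linarith
  have hfac : s * W ^ 2 + (1 - s) * (z * W + 1 - z) = W ^ 2 * (s + (1 - s) * P) := by
    rw [← hP]; ring
  rw [hfac, mul_pow] at hpc
  have h7 : D * (z ^ (d-1) * z ^ (d-1) * s ^ (d-1)) ≤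
      (Q ^ 2 * ρ ^ n * Vol ^ 2) * (z ^ (d-1) * z ^ (d-1) * s ^ (d-1)) := by
    refine hpc.trans ?_
    calc (W ^ 2) ^ n * (s + (1 - s) * P) ^ n ≤ (W ^ n) ^ 2 * (ρ ^ n * s ^ (d-1)) := by
          rw [← pow_mul, ← pow_mul, mul_comm 2 n]; gcongr
      _ ≤ (Q * (Vol * z ^ (d-1))) ^ 2 * (ρ ^ n * s ^ (d-1)) := by gcongr
      _ = _ := by ring
  exact le_of_mul_le_mul_right h7 (by positivity)

lemma asymp (ρ x δ : ℝ) (h0 : 0 < ρ) (h1 : ρ < 1) (hx : 0 < x) (hδ : 0 < δ) :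
    ∃ N : ℕ, ∀ n : ℕ, N ≤ n → 1 ≤ ⌊δ * (n:ℝ)⌋₊ ∧
      ∑ t ∈ Finset.Icc 2 ⌈2 * Real.sqrt n⌉₊, (Real.sqrt n) ^ t * (((n + 1) * (1 + n * x) ^ 2) ^ 2 * ρ ^ n) < 1 / 2 := by
  have hL : 0 < - Real.log ρ := by linarith [Real.log_neg h0 h1]
  set L := - Real.log ρ with hLdef
  set K : ℝ := 4 * (1 + x) ^ 4 * 3 with hK
  have hK0 : 0 < K := by positivity
  have e1 : ∀ᶠ n : ℕ in Filter.atTop, ‖Real.log (n:ℝ)‖ ≤ L / 24 * ‖(n:ℝ) ^ (1/2 : ℝ)‖ :=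
    tendsto_natCast_atTop_atTop.eventually ((isLittleO_log_rpow_atTop (r := 1/2) (by norm_num)).def (by positivity))
  have e2 : ∀ᶠ n : ℕ in Filter.atTop, Real.log (4 * K) / (L / 2) ≤ (n:ℝ) :=
    tendsto_natCast_atTop_atTop.eventually (Filter.eventually_ge_atTop _)
  have e3 : ∀ᶠ n : ℕ in Filter.atTop, 1 / δ ≤ (n:ℝ) :=
    tendsto_natCast_atTop_atTop.eventually (Filter.eventually_ge_atTop _)
  obtain ⟨N, hN⟩ := Filter.eventually_atTop.1 ((e1.and e2).and (e3.and (Filter.eventually_ge_atTop 1)))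
  refine ⟨N, fun n hn => ?_⟩
  obtain ⟨⟨f1, f2⟩, f3, f4⟩ := hN n hn
  have hn1 : (1:ℝ) ≤ n := by exact_mod_cast f4
  have hn0 : (0:ℝ) < n := by linarith
  constructor
  · rw [Nat.one_le_floor_iff]
    rw [div_le_iff₀ hδ] at f3
    linarith
  set r := Real.sqrt n with hr
  have hr1 : 1 ≤ r := by rw [hr]; exact Real.one_le_sqrt.2 hn1
  have hrr : r * r = n := Real.mul_self_sqrt hn0.le
  have hrn : r ≤ n := by nlinarith
  set M := ⌈2 * r⌉₊ with hM
  have hM3 : (M:ℝ) ≤ 3 * r := by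
    have := Nat.ceil_lt_add_one (show 0 ≤ 2 * r by linarith)
    linarith
  have hlog : Real.log n ≤ L / 24 * r := by
    rw [← Real.sqrt_eq_rpow, ← hr, Real.norm_of_nonneg (Real.log_nonneg hn1), Real.norm_of_nonneg (by linarith)] at f1
    exact f1
  have hQ : ((n + 1) * (1 + n * x) ^ 2) ^ 2 ≤ 4 * (1 + x) ^ 4 * (n:ℝ) ^ 6 := by
    have : ((n:ℝ) + 1) * (1 + n * x) ^ 2 ≤ (2 * n) * (n * (1 + x)) ^ 2 := by
      gcongr
      · linarith
      · nlinarith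
    calc _ ≤ ((2 * n) * (n * (1 + x)) ^ 2) ^ 2 := by gcongr
      _ = _ := by ring
  have hs : ∑ t ∈ Finset.Icc 2 M, r ^ t * (((n + 1) * (1 + n * x) ^ 2) ^ 2 * ρ ^ n) ≤ K * (n:ℝ) ^ (M + 7) * ρ ^ n := by
    calc _ ≤ ∑ t ∈ Finset.Icc 2 M, (n:ℝ) ^ M * (4 * (1 + x) ^ 4 * (n:ℝ) ^ 6 * ρ ^ n) := by
          apply Finset.sum_le_sum
          intro t ht
          have ht2 := (Finset.mem_Icc.1 ht).2
          have : r ^ t ≤ (n:ℝ) ^ M := (pow_le_pow_left₀ (by linarith) hrn t).trans (pow_le_pow_right₀ hn1 ht2)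
          gcongr
      _ = ((M + 1 - 2 : ℕ):ℝ) * ((n:ℝ) ^ M * (4 * (1 + x) ^ 4 * (n:ℝ) ^ 6 * ρ ^ n)) := by
          rw [Finset.sum_const, Nat.card_Icc, nsmul_eq_mul]
      _ ≤ (3 * n) * ((n:ℝ) ^ M * (4 * (1 + x) ^ 4 * (n:ℝ) ^ 6 * ρ ^ n)) := by
          gcongr
          have : ((M + 1 - 2 : ℕ):ℝ) ≤ M := by exact_mod_cast (by omega)
          linarith
      _ = _ := by rw [hK]; ring
  refine lt_of_le_of_lt hs ?_
  have hfin : 4 * (K * (n:ℝ) ^ (M + 7) * ρ ^ n) ≤ 1 := by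
    have hpos : 0 < 4 * (K * (n:ℝ) ^ (M + 7) * ρ ^ n) := by positivity
    rw [← Real.log_nonpos_iff hpos.le]
    have : Real.log (4 * (K * (n:ℝ) ^ (M + 7) * ρ ^ n)) = Real.log (4 * K) + (M + 7) * Real.log n - n * L := by
      rw [show 4 * (K * (n:ℝ) ^ (M + 7) * ρ ^ n) = (4 * K) * (n:ℝ) ^ (M + 7) * ρ ^ n by ring,
        Real.log_mul (by positivity) (by positivity), Real.log_mul (by positivity) (by positivity),
        Real.log_pow, Real.log_pow, hLdef]
      push_cast; ring
    rw [this]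
    have g1 : Real.log (4 * K) ≤ n * (L / 2) := by
      rwa [div_le_iff₀ (by positivity)] at f2
    have g2 : ((M:ℝ) + 7) * Real.log n ≤ (12 * r) * (L / 24 * r) := by
      have := Real.log_nonneg hn1
      gcongr
      linarith
    have g3 : (12 * r) * (L / 24 * r) = n * (L / 2) := by rw [← hrr]; ring
    linarith
  linarith

/-- For a prime power `q` (realized as the cardinality of a finite field `F`)
and a constant `δ ∈ (0, 1 - 1/q)`, there is a constant `c_δ > 0` such that for all sufficiently
large `n`, with `d = ⌊δn⌋`: if `k > 0` satisfies
`(q^k - 1)/(q - 1) < c_δ · √n · q^n / ∑_{i=0}^{d-1} C(n,i)(q-1)^i`, then there is a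
`k`-dimensional linear subspace of `F^n` all of whose nonzero elements have Hamming weight at
least `d`. -/
theorem gv_bound_sqrt_improvement
    (q : ℕ) (F : Type) [Field F] [Fintype F] [DecidableEq F] (hF : Fintype.card F = q)
    (δ : ℝ) (hδ0 : 0 < δ) (hδ1 : δ < 1 - 1 / (q : ℝ)) :
    ∃ c : ℝ, 0 < c ∧ ∃ N : ℕ, ∀ n : ℕ, N ≤ n → ∀ k : ℕ, 0 < k →
      ((q : ℝ) ^ k - 1) / ((q : ℝ) - 1) <
        c * Real.sqrt n * (q : ℝ) ^ n /
          (∑ i ∈ Finset.range ⌊δ * (n : ℝ)⌋₊, (n.choose i : ℝ) * ((q : ℝ) - 1) ^ i) →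
      ∃ C : Submodule F (Fin n → F), Module.finrank F C = k ∧
        ∀ x ∈ C, x ≠ 0 → ⌊δ * (n : ℝ)⌋₊ ≤ hammingNorm x := by
  have hq2 : 2 ≤ q := by rw [← hF]; exact Fintype.one_lt_card
  have hq : (2:ℝ) ≤ q := by exact_mod_cast hq2
  obtain ⟨ρ, x, hρ0, hρ1, hx, hpair⟩ := pair_bound_s2 q F hF δ hδ0 hδ1
  obtain ⟨N, hN⟩ := asymp ρ x δ hρ0 hρ1 hx hδ0
  refine ⟨1 / (q:ℝ) ^ 3, by positivity, N, ?_⟩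
  intro n hn k hk hlt
  obtain ⟨hd1, hsum⟩ := hN n hn
  have hpair := hpair n _ rfl hd1
  set d := ⌊δ * (n : ℝ)⌋₊ with hd
  have hball := ball_card q n d F hF
  set Vol := ∑ i ∈ Finset.range d, (n.choose i : ℝ) * ((q : ℝ) - 1) ^ i with hVol
  set B := univ.filter (fun x : Fin n → F => hammingNorm x < d) with hB
  have hB0 : (0 : Fin n → F) ∈ B := by
    simp only [hB, mem_filter, mem_univ, true_and, hammingNorm_zero]
    omega
  have hVol0 : 0 < Vol := by
    rw [← hball]
    exact_mod_cast Finset.card_pos.2 ⟨_, hB0⟩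
  set η : ℝ := ((n + 1) * (1 + n * x) ^ 2) ^ 2 * ρ ^ n with hη
  have hη0 : 0 ≤ η := by positivity
  have hmu : (Fintype.card (Fin (k+1) → F) : ℝ) * B.card ≤ Real.sqrt n * Fintype.card (Fin n → F) := by
    rw [hball]
    simp only [Fintype.card_fun, Fintype.card_fin, hF]
    push_cast
    rw [lt_div_iff₀ hVol0, div_mul_eq_mul_div, div_lt_iff₀ (by linarith)] at hlt
    have h1 : (q:ℝ) ≤ q ^ k := le_self_pow₀ (by linarith) hk.ne'
    have h2 : (q:ℝ) ^ k ≤ q * (q ^ k - 1) := by nlinarith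
    have h3 : (q:ℝ) ^ (k+1) ≤ q ^ 2 * (q ^ k - 1) := by rw [pow_succ]; nlinarith
    have h4 : 0 ≤ Real.sqrt n * (q:ℝ) ^ n := by positivity
    calc (q:ℝ) ^ (k+1) * Vol ≤ q ^ 2 * (q ^ k - 1) * Vol := by gcongr
      _ = q ^ 2 * ((q ^ k - 1) * Vol) := by ring
      _ ≤ q ^ 2 * (1 / (q:ℝ) ^ 3 * Real.sqrt n * q ^ n * (q - 1)) := by gcongr
      _ = (Real.sqrt n * q ^ n) * ((q - 1) / q) := by field_simp
      _ ≤ (Real.sqrt n * q ^ n) * 1 := by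
          apply mul_le_mul_of_nonneg_left _ h4
          rw [div_le_one (by linarith)]; linarith
      _ = _ := by ring
  have hP : ∀ v : Fin n → F, ((univ.filter (fun y : (Fin n → F) × (Fin n → F) =>
      y.1 ∈ B ∧ y.2 ∈ B ∧ y.1 + y.2 + v ∈ B)).card : ℝ) ≤ η * (B.card : ℝ) ^ 2 := by
    intro v
    rw [hball]
    refine le_trans (le_of_eq ?_) (hpair v)
    congr 2
    ext y
    simp only [hB, mem_filter, mem_univ, true_and]
  obtain ⟨G, hG1, hG2⟩ := exists_G_of_pair (F := F) (V := Fin (k+1) → F) B ⌈2 * Real.sqrt n⌉₊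
    (Real.sqrt n) η hη0 hmu (fun v => by convert hP v) (Nat.le_ceil _) hsum
  obtain ⟨C, hC1, hC2⟩ := exists_sub G {v | v ≠ 0 ∧ G v ∈ B} (by simp) (by
      rintro c v hc ⟨hv, hvB⟩
      refine ⟨smul_ne_zero hc hv, ?_⟩
      simp only [hB, mem_filter, mem_univ, true_and] at hvB ⊢
      rw [map_smul, hammingNorm_smul (fun _ => IsSMulRegular.of_ne_zero hc)]
      exact hvB) (by
      intro v hv hGv
      exact ⟨hv, by rw [hGv]; exact hB0⟩) k _ (by simp) hG1 (by
      intro t h2 hM p hp h3 h4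
      exact hG2 t h2 hM p hp (fun i => (h3 i).2) h4.2)
  refine ⟨C, hC1, fun y hy hy0 => ?_⟩
  obtain ⟨v, rfl, hv⟩ := hC2 y hy hy0
  by_contra hlt'
  apply hv
  refine ⟨fun h => hy0 (by rw [h, map_zero]), ?_⟩
  simp only [hB, mem_filter, mem_univ, true_and]
  omega
end

section
/- Let q be a prime power and let 0 < τ ≤ δ < 1 − 1/q² be constants. Then there exist a constant c > 0 and an integer N such that for all n ≥ N the following holds with d − 1 = ⌊δn⌋: for every nonzero vector u ∈ B_q^S(2n, d−1) with wt_S(u) ≥ τn, the set B_q^S(2n, d−1) ∩ {v ∈ 𝔽_q^{2n} : ⟨u, v⟩_S = 0} has cardinality at least ((1 − q^{−cn})/q) · Vol_q^S(2n, d−1) and at most ((1 + q^{−cn})/q) · Vol_q^S(2n, d−1). -/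
open Finset
open scoped Classical

/-- Symplectic weight of a vector in `F^{2n}`, written as `Fin n → F × F`. -/
noncomputable def sympWt {F : Type} [Zero F] [DecidableEq F] {n : ℕ} (u : Fin n → F × F) : ℕ :=
  hammingNorm u

/-- The symplectic inner product on `F^{2n}`: `⟨(a|b),(a'|b')⟩_S = ⟨a,b'⟩ - ⟨b,a'⟩`. -/
def sympInner {F : Type} [Field F] {n : ℕ} (u v : Fin n → F × F) : F :=
  ∑ i, ((u i).1 * (v i).2 - (u i).2 * (v i).1)

/-- The symplectic ball `B_q^S(2n, r)` of radius `r`. -/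
noncomputable def sympBall (F : Type) [Fintype F] [Zero F] [DecidableEq F] (n r : ℕ) :
    Finset (Fin n → F × F) :=
  Finset.univ.filter fun x => sympWt x ≤ r

/-- `Vol_q^S(2n, r) = ∑_{i=0}^{r} C(n,i)(q²-1)^i`, the volume of the symplectic ball. -/
def volS (q n r : ℕ) : ℕ :=
  ∑ i ∈ Finset.range (r + 1), n.choose i * (q ^ 2 - 1) ^ i


lemma aux_choose_step (n k : ℕ) (t : ℝ) (hk : k ≤ n) :
    ((n.choose (k+1) : ℝ) * t^(k+1)) * (k+1) = (n.choose k * t^k) * ((n - k) * t) := by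
  have h := Nat.choose_succ_right_eq n k
  have h' : (n.choose (k+1) : ℝ) * (k+1) = n.choose k * ((n:ℝ) - k) := by
    rw [← Nat.cast_sub hk]; exact_mod_cast h
  rw [pow_succ]; linear_combination t^k * t * h'

lemma aux_max_term (n r : ℕ) (hr0 : 0 < r) (hr : r < n) (t : ℝ) (ht : t * ((n:ℝ) - r) = r) :
    (1 + t)^n ≤ (n + 1) * (n.choose r * t^r) := by
  have hnr : (0:ℝ) < (n:ℝ) - r := by
    have : (r:ℝ) < n := by exact_mod_cast hr
    linarith
  have hr0' : (0:ℝ) < r := by exact_mod_cast hr0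
  have ht0 : 0 < t := by
    by_contra h
    push Not at h
    nlinarith
  set f : ℕ → ℝ := fun k => n.choose k * t^k with hf
  have hf0 : ∀ k, 0 ≤ f k := fun k => by simp only [hf]; positivity
  have up : ∀ k, k < r → f k ≤ f (k+1) := by
    intro k hk
    have h := aux_choose_step n k t (by omega)
    have hk' : (k:ℝ) + 1 ≤ r := by exact_mod_cast hk
    have h2 : (k:ℝ) + 1 ≤ (n - k) * t := by nlinarith
    have h3 : f k * (k+1) ≤ f (k+1) * (k+1) := by
      change f (k+1) * (k+1) = f k * _ at h
      rw [h]; exact mul_le_mul_of_nonneg_left h2 (hf0 k)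
    exact le_of_mul_le_mul_right h3 (by positivity)
  have down : ∀ k, r ≤ k → k ≤ n → f (k+1) ≤ f k := by
    intro k hk hkn
    have h := aux_choose_step n k t hkn
    have hk' : (r:ℝ) ≤ k := by exact_mod_cast hk
    have h2 : ((n:ℝ) - k) * t ≤ k + 1 := by nlinarith
    have h3 : f (k+1) * (k+1) ≤ f k * (k+1) := by
      change f (k+1) * (k+1) = f k * _ at h
      rw [h]; exact mul_le_mul_of_nonneg_left h2 (hf0 k)
    exact le_of_mul_le_mul_right h3 (by positivity)
  have hup : ∀ j, j ≤ r → f (r - j) ≤ f r := by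
    intro j
    induction j with
    | zero => intro _; simp
    | succ j ih =>
      intro hj
      have := up (r - (j+1)) (by omega)
      rw [show r - (j+1) + 1 = r - j by omega] at this
      exact this.trans (ih (by omega))
  have hdown : ∀ j, r + j ≤ n → f (r + j) ≤ f r := by
    intro j
    induction j with
    | zero => intro _; simp
    | succ j ih =>
      intro hj
      exact (down (r+j) (by omega) (by omega)).trans (ih (by omega))
  have hall : ∀ k ∈ Finset.range (n+1), f k ≤ f r := by
    intro k hk
    rw [Finset.mem_range] at hk
    rcases le_total k r with h | h
    · have := hup (r - k) (by omega)
      rwa [show r - (r-k) = k by omega] at this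
    · have := hdown (k - r) (by omega)
      rwa [show r + (k-r) = k by omega] at this
  have := Finset.sum_le_card_nsmul _ _ _ hall
  rw [Finset.card_range, nsmul_eq_mul] at this
  rw [add_comm 1 t, add_pow]
  calc _ = ∑ k ∈ Finset.range (n+1), f k := by
        apply Finset.sum_congr rfl; intro k _; simp [hf, mul_comm]
    _ ≤ _ := by exact_mod_cast this

/-- the nonzero-coordinate box with support exactly `S`. -/
lemma aux_ball_sum {F : Type} [Field F] [Fintype F] [DecidableEq F] (n r : ℕ)
    (g : Fin n → F × F → ℂ) (hg : ∀ i, g i 0 = 1) :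
    ∑ v ∈ sympBall F n r, ∏ i, g i (v i) =
      ∑ S ∈ Finset.univ.filter (fun S : Finset (Fin n) => S.card ≤ r),
        ∏ i ∈ S, ∑ x ∈ Finset.univ.erase (0 : F × F), g i x := by
  rw [← Finset.sum_fiberwise_of_maps_to (t := Finset.univ.filter (fun S : Finset (Fin n) => S.card ≤ r))
    (g := fun v : Fin n → F × F => Finset.univ.filter (fun i => v i ≠ 0))]
  · apply Finset.sum_congr rfl
    intro S hS
    have h1 : (sympBall F n r).filter (fun v => Finset.univ.filter (fun i => v i ≠ 0) = S) =
        Fintype.piFinset (fun i => if i ∈ S then Finset.univ.erase (0 : F × F) else {0}) := by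
      ext v
      simp only [sympBall, sympWt, hammingNorm, Finset.mem_filter, Finset.mem_univ, true_and, Fintype.mem_piFinset] at hS ⊢
      constructor
      · rintro ⟨_, rfl⟩ i
        by_cases h : v i = 0 <;> simp [h]
      · intro h
        have hh : Finset.univ.filter (fun i => v i ≠ 0) = S := by
          ext i
          have := h i
          by_cases hi : i ∈ S <;> simp [hi] at this ⊢ <;> exact this
        refine ⟨?_, hh⟩
        convert hS
        
    rw [h1, ← Finset.prod_univ_sum, ← Finset.prod_subset (Finset.subset_univ S)]
    · apply Finset.prod_congr rfl
      intro i hi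
      simp [hi]
    · intro i _ hi
      simp [hi, hg]
  · intro v hv
    simp only [sympBall, sympWt, hammingNorm, Finset.mem_filter, Finset.mem_univ, true_and] at hv ⊢
    convert hv

lemma aux_ball_card {F : Type} [Field F] [Fintype F] [DecidableEq F] (n r : ℕ) :
    (sympBall F n r).card = volS (Fintype.card F) n r := by
  have h := aux_ball_sum (F := F) n r (fun _ _ => 1) (fun _ => rfl)
  have hM : ((Finset.univ.erase (0 : F × F)).card) = Fintype.card F ^ 2 - 1 := by
    rw [Finset.card_erase_of_mem (Finset.mem_univ _), Finset.card_univ, Fintype.card_prod, sq]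
  simp only [Finset.prod_const_one, Finset.sum_const, nsmul_eq_mul, mul_one, Finset.prod_const, hM] at h
  have h2 : (sympBall F n r).card = ∑ S ∈ Finset.univ.filter (fun S : Finset (Fin n) => S.card ≤ r),
      (Fintype.card F ^ 2 - 1)^S.card := by exact_mod_cast h
  rw [h2, volS, ← Finset.sum_fiberwise_of_maps_to (t := Finset.range (r+1)) (g := fun S : Finset (Fin n) => S.card)]
  · apply Finset.sum_congr rfl
    intro i hi
    rw [Finset.mem_range] at hi
    rw [Finset.sum_congr rfl (g := fun _ => (Fintype.card F ^ 2 - 1)^i)]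
    · rw [Finset.sum_const, smul_eq_mul]
      congr 1
      have : (Finset.univ.filter (fun S : Finset (Fin n) => S.card ≤ r)).filter (fun S => S.card = i) = Finset.powersetCard i Finset.univ := by
        ext S; simp [Finset.mem_powersetCard]; omega
      rw [this, Finset.card_powersetCard, Finset.card_univ, Fintype.card_fin]
    · intro S hS
      rw [(Finset.mem_filter.1 hS).2]
  · intro S hS
    simp at hS ⊢; omega

lemma aux_char_sum {F : Type} [Field F] [Fintype F] [DecidableEq F] (ψ : AddChar F ℂ)
    (hψ : ψ.IsPrimitive) (a b : F) (h : (a, b) ≠ (0, 0)) :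
    ∑ x ∈ Finset.univ.erase (0 : F × F), ψ (a * x.2 - b * x.1) = -1 := by
  have key : ∑ x : F × F, ψ (a * x.2 - b * x.1) = 0 := by
    have hz : ∀ c : F, c ≠ 0 → ∑ y : F, ψ (c * y) = 0 := fun c hc => by
      have := AddChar.sum_mulShift c hψ
      simp [hc] at this
      rw [← this]
      exact Finset.sum_congr rfl (fun y _ => by rw [mul_comm])
    rw [Fintype.sum_prod_type]
    have : ∀ x y : F, ψ (a * y - b * x) = ψ ((-b) * x) * ψ (a * y) := fun x y => by
      rw [← AddChar.map_add_eq_mul]; congr 1; ring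
    simp only [this, ← Finset.mul_sum, ← Finset.sum_mul]
    by_cases ha : a = 0
    · have hb : -b ≠ 0 := by
        intro hb; apply h; rw [ha, neg_eq_zero.1 hb]
      rw [hz _ hb, zero_mul]
    · rw [hz _ ha, mul_zero]
  have e := Finset.add_sum_erase Finset.univ (fun x : F × F => ψ (a * x.2 - b * x.1)) (Finset.mem_univ (0 : F × F))
  rw [key] at e
  simp only [Prod.fst_zero, Prod.snd_zero, mul_zero, sub_zero, AddChar.map_zero_eq_one] at e
  linear_combination e

lemma aux_map_sum {F ι : Type} [Field F] (ψ : AddChar F ℂ) (s : Finset ι) (f : ι → F) :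
    ψ (∑ i ∈ s, f i) = ∏ i ∈ s, ψ (f i) := by
  induction s using Finset.induction_on with
  | empty => simp
  | insert i s hi ih => rw [Finset.sum_insert hi, Finset.prod_insert hi, AddChar.map_add_eq_mul, ih]

lemma aux_norm_bound {F : Type} [Field F] [Fintype F] [DecidableEq F] (n r : ℕ) (ψ : AddChar F ℂ)
    (hψ : ψ.IsPrimitive) (l : F) (hl : l ≠ 0) (u : Fin n → F × F) (z M : ℝ) (hz : 0 < z) (hz1 : z ≤ 1)
    (hM : M = (Fintype.card F : ℝ)^2 - 1) (hM0 : 0 ≤ M) :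
    ‖∑ v ∈ sympBall F n r, ψ (l * sympInner u v)‖ * z ^ r ≤
      (1 + z)^(sympWt u) * (1 + M * z)^(n - sympWt u) := by
  have h1 : ∀ v : Fin n → F × F, ψ (l * sympInner u v) =
      ∏ i, ψ ((l * (u i).1) * (v i).2 - (l * (u i).2) * (v i).1) := by
    intro v
    rw [← aux_map_sum, sympInner, Finset.mul_sum]
    congr 1
    exact Finset.sum_congr rfl (fun i _ => by ring)
  simp only [h1]
  rw [aux_ball_sum n r (fun i x => ψ ((l * (u i).1) * x.2 - (l * (u i).2) * x.1)) (by simp)]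
  set a : Fin n → ℝ := fun i => if u i = 0 then M else 1 with ha
  have ha0 : ∀ i, 0 ≤ a i := by intro i; simp only [ha]; split_ifs <;> linarith
  have h2 : ∀ i, ‖∑ x ∈ Finset.univ.erase (0 : F × F), ψ ((l * (u i).1) * x.2 - (l * (u i).2) * x.1)‖ = a i := by
    intro i
    by_cases hi : u i = 0
    · have hc : (1:ℕ) ≤ Fintype.card F * Fintype.card F := Nat.succ_le_of_lt (by have := Fintype.card_pos (α := F); positivity)
      simp only [ha, hi, if_true, hM]
      simp [Finset.card_erase_of_mem, Nat.cast_sub hc]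
      rw [← Nat.cast_mul, ← Nat.cast_one, ← Nat.cast_sub hc, Complex.norm_natCast, Nat.cast_sub hc]
      push_cast; ring
    · rw [aux_char_sum ψ hψ]
      · simp [ha, hi]
      · intro h
        apply hi
        simp [hl] at h
        exact Prod.ext h.1 h.2
  calc _ ≤ (∑ S ∈ Finset.univ.filter (fun S : Finset (Fin n) => S.card ≤ r), ∏ i ∈ S, a i) * z^r := by
        gcongr
        refine (norm_sum_le _ _).trans (le_of_eq ?_)
        apply Finset.sum_congr rfl
        intro S _
        rw [norm_prod]
        exact Finset.prod_congr rfl (fun i _ => h2 i)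
    _ ≤ ∑ S ∈ Finset.univ.filter (fun S : Finset (Fin n) => S.card ≤ r), ∏ i ∈ S, (z * a i) := by
        rw [Finset.sum_mul]
        apply Finset.sum_le_sum
        intro S hS
        rw [Finset.prod_mul_distrib, Finset.prod_const, mul_comm]
        exact mul_le_mul_of_nonneg_right (pow_le_pow_of_le_one hz.le hz1 (Finset.mem_filter.1 hS).2)
          (Finset.prod_nonneg (fun i _ => ha0 i))
    _ ≤ ∑ S ∈ (Finset.univ : Finset (Fin n)).powerset, ∏ i ∈ S, (z * a i) := by
        apply Finset.sum_le_sum_of_subset_of_nonneg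
        · intro S _; simp
        · intro S _ _
          exact Finset.prod_nonneg (fun i _ => mul_nonneg hz.le (ha0 i))
    _ = ∏ i, (1 + z * a i) := (Finset.prod_one_add _).symm
    _ = _ := by
        rw [← Finset.prod_filter_mul_prod_filter_not Finset.univ (fun i => u i ≠ 0)]
        congr 1
        · rw [Finset.prod_congr rfl (g := fun _ => 1 + z), Finset.prod_const]
          · congr 1
          · intro i hi
            simp at hi
            simp [ha, hi]
        · rw [Finset.prod_congr rfl (g := fun _ => 1 + M * z), Finset.prod_const]
          · congr 1
            have := Finset.card_filter_add_card_filter_not (s := (Finset.univ : Finset (Fin n))) (fun i => u i ≠ 0)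
            rw [Finset.card_univ, Fintype.card_fin] at this
            have h3 : sympWt u = (Finset.univ.filter (fun i => u i ≠ 0)).card := by
              simp only [sympWt, hammingNorm]
            omega
          · intro i hi
            simp at hi
            simp [ha, hi, mul_comm]

lemma aux_main_count {F : Type} [Field F] [Fintype F] [DecidableEq F] (n r : ℕ)
    (u : Fin n → F × F) (z M : ℝ) (hz : 0 < z) (hz1 : z ≤ 1)
    (hM : M = (Fintype.card F : ℝ)^2 - 1) (hM0 : 0 ≤ M) :
    |(Fintype.card F : ℝ) * (((sympBall F n r).filter fun v => sympInner u v = 0).card : ℝ)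
      - (volS (Fintype.card F) n r : ℝ)| * z^r ≤
      Fintype.card F * ((1 + z)^(sympWt u) * (1 + M * z)^(n - sympWt u)) := by
  obtain ⟨ψ, hψ⟩ : ∃ ψ : AddChar F ℂ, ψ.IsPrimitive := by
    obtain ⟨ψ, h⟩ := AddChar.exists_apply_ne_zero.2 (one_ne_zero : (1:F) ≠ 0)
    exact ⟨ψ, AddChar.IsPrimitive.of_ne_one (fun h' => h (by simp [h']))⟩
  set D := ((sympBall F n r).filter fun v => sympInner u v = 0).card
  have h1 : (Fintype.card F : ℂ) * D = ∑ l : F, ∑ v ∈ sympBall F n r, ψ (l * sympInner u v) := by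
    rw [Finset.sum_comm]
    simp only [AddChar.sum_mulShift _ hψ]
    simp [D, ← Finset.sum_filter, mul_comm]
  have h2 : (Fintype.card F : ℂ) * D - volS (Fintype.card F) n r = ∑ l ∈ Finset.univ.erase (0:F), ∑ v ∈ sympBall F n r, ψ (l * sympInner u v) := by
    rw [h1, ← Finset.add_sum_erase _ _ (Finset.mem_univ (0:F)), ← aux_ball_card]
    simp
  have h3 : |(Fintype.card F : ℝ) * D - (volS (Fintype.card F) n r : ℝ)| = ‖(Fintype.card F : ℂ) * D - volS (Fintype.card F) n r‖ := by
    rw [← Real.norm_eq_abs, ← Complex.norm_real]; push_cast; rfl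
  rw [h3, h2]
  have hX : 0 ≤ ((1 + z)^(sympWt u) * (1 + M * z)^(n - sympWt u)) := by positivity
  calc _ ≤ (∑ l ∈ Finset.univ.erase (0:F), ‖∑ v ∈ sympBall F n r, ψ (l * sympInner u v)‖) * z^r := by
        gcongr; exact norm_sum_le _ _
    _ ≤ ∑ l ∈ Finset.univ.erase (0:F), ((1 + z)^(sympWt u) * (1 + M * z)^(n - sympWt u)) := by
        rw [Finset.sum_mul]
        apply Finset.sum_le_sum
        intro l hl
        exact aux_norm_bound n r ψ hψ l (Finset.ne_of_mem_erase hl) u z M hz hz1 hM hM0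
    _ ≤ _ := by
        rw [Finset.sum_const, nsmul_eq_mul]
        gcongr
        exact Finset.card_le_univ _

lemma aux_exp (q : ℕ) (hq : 2 ≤ q) (ρ τ : ℝ) (hρ0 : 0 < ρ) (hρ1 : ρ < 1) (hτ : 0 < τ) :
    ∃ c : ℝ, 0 < c ∧ ∃ N : ℕ, ∀ n : ℕ, N ≤ n → ∀ w : ℕ, τ * n ≤ w →
      (q:ℝ) * ((n:ℝ) + 1) * ρ^w ≤ (q:ℝ)^(-(c * (n:ℝ))) := by
  have hq1 : (1:ℝ) < q := by exact_mod_cast hq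
  have hq0 : (0:ℝ) < q := by linarith
  have hlq := Real.log_pos hq1
  have hlρ := Real.log_neg hρ0 hρ1
  set a : ℝ := -(τ * Real.log ρ) / 2 with ha
  have ha0 : 0 < a := by rw [ha]; nlinarith
  refine ⟨a / Real.log q, by positivity, ?_⟩
  have hev : ∀ᶠ n : ℕ in Filter.atTop, (q:ℝ) * ((n:ℝ) + 1) ≤ Real.exp (a * n) := by
    have hT : Filter.Tendsto (fun n : ℕ => a * (n:ℝ)) Filter.atTop Filter.atTop :=
      tendsto_natCast_atTop_atTop.const_mul_atTop ha0
    have h2 := ((Real.tendsto_exp_div_pow_atTop 1).comp hT).eventually_ge_atTop (2 * q / a)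
    filter_upwards [h2, Filter.eventually_ge_atTop 1] with n hn hn1
    have hn1' : (1:ℝ) ≤ n := by exact_mod_cast hn1
    simp only [Function.comp, pow_one] at hn
    rw [le_div_iff₀ (by positivity)] at hn
    have : 2 * q / a * (a * n) = 2 * (q:ℝ) * n := by field_simp
    rw [this] at hn
    nlinarith
  obtain ⟨N, hN⟩ := Filter.eventually_atTop.1 hev
  refine ⟨N, fun n hn w hw => ?_⟩
  have h1 : (q:ℝ)^(-(a / Real.log q * (n:ℝ))) = Real.exp (-(a * n)) := by
    rw [Real.rpow_def_of_pos hq0]; congr 1; field_simp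
  have h2 : ρ^w ≤ Real.exp (-(2 * a * n)) := by
    rw [← Real.rpow_natCast, Real.rpow_def_of_pos hρ0, Real.exp_le_exp, ha]
    nlinarith
  rw [h1]
  calc _ ≤ Real.exp (a * n) * Real.exp (-(2 * a * n)) := by
        gcongr
        exact hN n hn
    _ = _ := by rw [← Real.exp_add]; congr 1; ring

/-- For a prime power `q` (realized as the cardinality of a finite field `F`)
and constants `0 < τ ≤ δ < 1 - 1/q²`, there exist `c > 0` and `N` such that for all `n ≥ N`,
with `d - 1 = ⌊δn⌋`: for every nonzero `u ∈ B_q^S(2n, d-1)` with `wt_S(u) ≥ τn`, the set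
`B_q^S(2n, d-1) ∩ {v : ⟨u,v⟩_S = 0}` has cardinality between
`((1 - q^{-cn})/q)·Vol_q^S(2n,d-1)` and `((1 + q^{-cn})/q)·Vol_q^S(2n,d-1)`. -/
theorem symp_one_vector_intersection_bound
    (q : ℕ) (F : Type) [Field F] [Fintype F] [DecidableEq F] (hF : Fintype.card F = q)
    (τ δ : ℝ) (hτ0 : 0 < τ) (hτδ : τ ≤ δ) (hδ : δ < 1 - 1 / (q : ℝ) ^ 2) :
    ∃ c : ℝ, 0 < c ∧ ∃ N : ℕ, ∀ n : ℕ, N ≤ n →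
      ∀ u : Fin n → F × F, u ≠ 0 → u ∈ sympBall F n ⌊δ * (n : ℝ)⌋₊ →
        τ * (n : ℝ) ≤ (sympWt u : ℝ) →
        (1 - (q : ℝ) ^ (-(c * (n : ℝ)))) / (q : ℝ) * (volS q n ⌊δ * (n : ℝ)⌋₊ : ℝ) ≤
            (((sympBall F n ⌊δ * (n : ℝ)⌋₊).filter fun v => sympInner u v = 0).card : ℝ) ∧
          (((sympBall F n ⌊δ * (n : ℝ)⌋₊).filter fun v => sympInner u v = 0).card : ℝ) ≤
            (1 + (q : ℝ) ^ (-(c * (n : ℝ)))) / (q : ℝ) * (volS q n ⌊δ * (n : ℝ)⌋₊ : ℝ) := by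
  have hq2 : 2 ≤ q := by rw [← hF]; exact Fintype.one_lt_card
  have hq2' : (2:ℝ) ≤ q := by exact_mod_cast hq2
  set M : ℝ := (q:ℝ)^2 - 1 with hM
  have hM3 : 3 ≤ M := by rw [hM]; nlinarith
  have hδ0 : 0 < δ := lt_of_lt_of_le hτ0 hτδ
  set z0 : ℝ := δ / (2 * M) with hz0
  have hz0p : 0 < z0 := by positivity
  obtain ⟨c, hc, N, hN⟩ := aux_exp q hq2 ((1 + z0) / (1 + M * z0)) τ (by positivity)
    (by rw [div_lt_one (by positivity)]; nlinarith) hτ0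
  refine ⟨c, hc, max N (⌈1 / δ⌉₊ + 1), ?_⟩
  intro n hn u _ _ hu
  have hnN := hN n (le_of_max_le_left hn) (sympWt u) hu
  have hn1 : ⌈1 / δ⌉₊ + 1 ≤ n := le_of_max_le_right hn
  have hδn : 1 ≤ δ * n := by
    have h1 := Nat.le_ceil (1 / δ)
    have h2 : (⌈1 / δ⌉₊ : ℝ) + 1 ≤ n := by exact_mod_cast hn1
    have h3 : 1 / δ ≤ n := by linarith
    rw [div_le_iff₀ hδ0] at h3
    linarith
  have hn0 : (0:ℝ) < n := by
    have : 0 < n := by omega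
    exact_mod_cast this
  set r := ⌊δ * (n:ℝ)⌋₊ with hr
  have hr1 : 1 ≤ r := by rw [hr]; exact Nat.le_floor (by simpa using hδn)
  have hr1' : (1:ℝ) ≤ r := by exact_mod_cast hr1
  have hrle : (r:ℝ) ≤ δ * n := Nat.floor_le (by positivity)
  have hrgt : δ * n < r + 1 := Nat.lt_floor_add_one _
  have hQ : 1 / (q:ℝ)^2 * (M + 1) = 1 := by rw [hM]; field_simp; ring
  have hδM : δ * (M + 1) ≤ M := by nlinarith
  have hrM : (r:ℝ) * (M + 1) ≤ M * n := by nlinarith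
  have hrn' : (r:ℝ) < n := by nlinarith
  have hrn : r < n := by exact_mod_cast hrn'
  have hnr : (0:ℝ) < n - r := by linarith
  set t : ℝ := r / ((n:ℝ) - r) with ht
  have ht0 : 0 < t := by positivity
  have htr : t * ((n:ℝ) - r) = r := by rw [ht]; field_simp
  set z : ℝ := t / M with hz
  have hMz : M * z = t := by rw [hz]; field_simp
  have hzp : 0 < z := by positivity
  have hz1 : z ≤ 1 := by
    rw [hz, div_le_one (by positivity), ht, div_le_iff₀ hnr]; linarith
  have hzz : z0 ≤ z := by
    have h1 : δ / 2 ≤ t := by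
      rw [ht, le_div_iff₀ hnr]
      nlinarith
    rw [hz, hz0, ← div_div]
    gcongr
  have hmax := aux_max_term n r hr1 hrn t htr
  have hcnt := aux_main_count n r u z M hzp hz1 (by rw [hF]) (by linarith)
  rw [hF, hMz] at hcnt
  set D : ℝ := (((sympBall F n r).filter fun v => sympInner u v = 0).card : ℝ) with hD
  set V : ℝ := (volS q n r : ℝ) with hV
  have hV1 : (n.choose r : ℝ) * M^r ≤ V := by
    have h1 : n.choose r * (q^2-1)^r ≤ volS q n r := by
      unfold volS
      exact Finset.single_le_sum (f := fun i => n.choose i * (q^2-1)^i) (fun _ _ => Nat.zero_le _)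
        (Finset.mem_range.2 (Nat.lt_succ_self r))
    have h2 : ((q^2 - 1 : ℕ) : ℝ) = M := by
      rw [hM, Nat.cast_sub (Nat.one_le_pow _ _ (by omega))]; push_cast; rfl
    rw [hV, ← h2]
    exact_mod_cast h1
  have hV0 : 0 ≤ V := by rw [hV]; positivity
  have hw : sympWt u ≤ n := by
    have := hammingNorm_le_card_fintype (x := u)
    simpa [sympWt] using this
  have hρ : (1 + z) / (1 + t) ≤ (1 + z0) / (1 + M * z0) := by
    rw [← hMz, div_le_div_iff₀ (by positivity) (by positivity)]
    nlinarith
  have hvol : (1 + t)^n ≤ (n + 1) * (V * z^r) := by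
    refine hmax.trans ?_
    rw [← hMz, mul_pow, ← mul_assoc (n.choose r : ℝ)]
    gcongr
  have hfin : |q * D - V| * z^r ≤ ((q:ℝ)^(-(c * (n:ℝ))) * V) * z^r := by
    calc _ ≤ _ := hcnt
      _ = q * (((1 + z) / (1 + t))^(sympWt u) * (1 + t)^n) := by
        have hp : (1 + t)^n = (1 + t)^(sympWt u) * (1 + t)^(n - sympWt u) := by
          rw [← pow_add, Nat.add_sub_cancel' hw]
        rw [div_pow, hp]
        field_simp
      _ ≤ q * (((1 + z0) / (1 + M * z0))^(sympWt u) * ((n + 1) * (V * z^r))) := by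
        gcongr
      _ = (q * ((n:ℝ) + 1) * ((1 + z0) / (1 + M * z0))^(sympWt u)) * (V * z^r) := by ring
      _ ≤ (q:ℝ)^(-(c * (n:ℝ))) * (V * z^r) := by gcongr
      _ = _ := by ring
  have hfin2 := abs_le.1 (le_of_mul_le_mul_right hfin (by positivity))
  have hq0 : (0:ℝ) < q := by linarith
  constructor
  · rw [div_mul_eq_mul_div, div_le_iff₀ hq0]
    linarith [hfin2.1]
  · rw [div_mul_eq_mul_div, le_div_iff₀ hq0]
    linarith [hfin2.2]
end
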